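/- (Hessian oscillation decay) Let F : Sym(n) → ℝ be concave, satisfy F(0) = 0, and be uniformly elliptic in the sense that λ‖N‖ ≤ F(M + N) − F(M) ≤ Λ‖N‖ for all M ∈ Sym(n) and all positive semidefinite N ∈ Sym(n). There exists ρ₀ ∈ (0,1) depending only on n, λ, Λ such that: if u ∈ C²(B₁) satisfies F(D²u(x)) = 0 for all x ∈ B₁ and the Hessian map 𝓗 := D²u : B₁ → Sym(n) satisfies diam 𝓗(B₁) = 1, then diam 𝓗(B_{ρ₀}) < 1/2, where diam is taken with respect to the norm on Sym(n). -/

import Mathlib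

open MeasureTheory Metric Set Filter
open scoped ENNReal NNReal Topology

noncomputable section

/-- Euclidean space `ℝⁿ`. -/
abbrev En (n : ℕ) := EuclideanSpace ℝ (Fin n)

/-- Real `n × n` matrices. -/
abbrev Mat (n : ℕ) := Matrix (Fin n) (Fin n) ℝ

/-- The `L²` operator norm of a matrix. -/
def opNorm {n : ℕ} (M : Mat n) : ℝ := ‖Matrix.toEuclideanCLM (𝕜 := ℝ) M‖

/-- The second partial derivative `∂_{ij} u (x)`. -/
def pd2 {n : ℕ} (u : En n → ℝ) (i j : Fin n) (x : En n) : ℝ :=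
  fderiv ℝ (fun y => fderiv ℝ u y (EuclideanSpace.single i 1)) x (EuclideanSpace.single j 1)

/-- The Hessian matrix `D²u(x)`. -/
def hessian {n : ℕ} (u : En n → ℝ) (x : En n) : Mat n :=
  Matrix.of fun i j => pd2 u i j x

/-- `F` is uniformly elliptic on symmetric matrices:
`λ‖N‖ ≤ F(M + N) − F(M) ≤ Λ‖N‖` for all symmetric `M` and positive semidefinite `N`. -/
def UnifEllipticOperator {n : ℕ} (lam Lam : ℝ) (F : Mat n → ℝ) : Prop :=
  ∀ M N : Mat n, M.IsSymm → N.IsSymm → N.PosSemidef →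
    lam * opNorm N ≤ F (M + N) - F M ∧ F (M + N) - F M ≤ Lam * opNorm N

/-- `F` is concave on the space of symmetric matrices. -/
def ConcaveOnSym {n : ℕ} (F : Mat n → ℝ) : Prop :=
  ∀ M N : Mat n, M.IsSymm → N.IsSymm → ∀ t : ℝ, t ∈ Set.Icc (0 : ℝ) 1 →
    t * F M + (1 - t) * F N ≤ F (t • M + (1 - t) • N)

/-- The diameter of the image of the Hessian map `𝓗 = D²u` over `S`, with respect to the
operator norm on symmetric matrices. -/
def hessDiam {n : ℕ} (u : En n → ℝ) (S : Set (En n)) : ℝ :=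
  sSup {d : ℝ | ∃ x ∈ S, ∃ y ∈ S, d = opNorm (hessian u x - hessian u y)}

/-- Second derivative quadratic form. -/
def H2 {n : ℕ} (w : En n → ℝ) (x z : En n) : ℝ := fderiv ℝ (fderiv ℝ w) x z z

/-- Pointwise supersolution property. -/
def SS {n : ℕ} (L : ℝ) (w : En n → ℝ) (x : En n) : Prop :=
  ∀ t : ℝ, 0 ≤ t → (∀ z, -(t * ‖z‖ ^ 2) ≤ H2 w x z) → ∀ z, H2 w x z ≤ L * t * ‖z‖ ^ 2

theorem second_test (f f' : ℝ → ℝ) (c : ℝ) (hf : ∀ᶠ s in 𝓝 (0:ℝ), HasDerivAt f (f' s) s)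
    (hf' : HasDerivAt f' c 0) (hmin : IsLocalMin f 0) : 0 ≤ c := by
  by_contra hc
  push Not at hc
  have h1 : deriv f =ᶠ[𝓝 0] f' := hf.mono fun s hs => hs.deriv
  have h2 : deriv (deriv f) 0 = c := by rw [h1.deriv_eq, hf'.deriv]
  have h3 : deriv f 0 = 0 := hmin.deriv_eq_zero
  have hmax : IsLocalMax f 0 :=
    isLocalMax_of_deriv_deriv_neg (by rw [h2]; exact hc) h3 hf.self_of_nhds.continuousAt
  have h4 : f =ᶠ[𝓝 0] fun _ => f 0 := by
    filter_upwards [hmax, hmin] with s a b using le_antisymm a b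
  have h5 : deriv f =ᶠ[𝓝 0] fun _ => 0 := by
    have := h4.deriv
    simpa using this
  have h6 : deriv (deriv f) 0 = 0 := by rw [h5.deriv_eq]; simp
  linarith

theorem cda_near {n : ℕ} {w : En n → ℝ} {x : En n} (hw : ContDiffAt ℝ 2 w x) :
    ∀ᶠ y in 𝓝 x, DifferentiableAt ℝ w y := by
  have := hw.eventually (by simp)
  exact this.mono fun y hy => hy.differentiableAt (by norm_num)

theorem cda_fderiv {n : ℕ} {w : En n → ℝ} {x : En n} (hw : ContDiffAt ℝ 2 w x) :
    DifferentiableAt ℝ (fderiv ℝ w) x :=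
  (hw.fderiv_right (m := 1) (by norm_num)).differentiableAt (by norm_num)

theorem line_deriv1 {n : ℕ} {w : En n → ℝ} {x z : En n} {s : ℝ}
    (hw : DifferentiableAt ℝ w (x + s • z)) :
    HasDerivAt (fun s : ℝ => w (x + s • z)) (fderiv ℝ w (x + s • z) z) s := by
  have h : HasDerivAt (fun s : ℝ => x + s • z) z s := by
    simpa using ((hasDerivAt_id s).smul_const z).const_add x
  exact hw.hasFDerivAt.comp_hasDerivAt s h

theorem line_deriv2 {n : ℕ} {w : En n → ℝ} {x z : En n} {s : ℝ}
    (hw : ContDiffAt ℝ 2 w (x + s • z)) :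
    HasDerivAt (fun s : ℝ => fderiv ℝ w (x + s • z) z) (H2 w (x + s • z) z) s := by
  have h : HasDerivAt (fun s : ℝ => x + s • z) z s := by
    simpa using ((hasDerivAt_id s).smul_const z).const_add x
  have h2 := (cda_fderiv hw).hasFDerivAt.comp_hasDerivAt s h
  exact h2.clm_apply (hasDerivAt_const s z) |>.congr_deriv (by simp [H2])

theorem line_near {n : ℕ} {w : En n → ℝ} {x z : En n} (hw : ContDiffAt ℝ 2 w x) :
    ∀ᶠ s in 𝓝 (0:ℝ), DifferentiableAt ℝ w (x + s • z) := by
  have hc : Tendsto (fun s : ℝ => x + s • z) (𝓝 0) (𝓝 x) := by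
    have : Continuous (fun s : ℝ => x + s • z) := by fun_prop
    simpa using this.tendsto 0
  exact hc.eventually (cda_near hw)

theorem line_min {n : ℕ} {f : En n → ℝ} {x : En n} (z : En n) (h : IsLocalMin f x) :
    IsLocalMin (fun s : ℝ => f (x + s • z)) 0 := by
  have hc : Tendsto (fun s : ℝ => x + s • z) (𝓝 0) (𝓝 x) := by
    have : Continuous (fun s : ℝ => x + s • z) := by fun_prop
    simpa using this.tendsto 0
  have := hc.eventually h
  simpa [IsLocalMin, IsMinFilter] using this

theorem q_deriv {n : ℕ} (x y z : En n) (s : ℝ) :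
    HasDerivAt (fun s : ℝ => ‖x + s • z - y‖ ^ 2) (2 * (inner ℝ (x - y) z + s * ‖z‖ ^ 2)) s := by
  have e : (fun s : ℝ => ‖x + s • z - y‖ ^ 2) =
      fun s : ℝ => ‖x - y‖ ^ 2 + 2 * (s * inner ℝ (x - y) z) + s ^ 2 * ‖z‖ ^ 2 := by
    funext s
    have : x + s • z - y = (x - y) + s • z := by abel
    rw [this, norm_add_sq_real, norm_smul, inner_smul_right]
    simp [mul_pow]
  rw [e]
  have h := (((hasDerivAt_id s).mul_const (inner ℝ (x - y) z)).const_mul 2).const_add (‖x - y‖ ^ 2)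
  have h2 := h.add (((hasDerivAt_id s).pow 2).mul_const (‖z‖ ^ 2))
  refine h2.congr_deriv ?_
  simp
  ring

theorem contact_hess {n : ℕ} {w : En n → ℝ} {x y : En n} {a : ℝ} (hw : ContDiffAt ℝ 2 w x)
    (hm : IsLocalMin (fun z => w z + a / 2 * ‖z - y‖ ^ 2) x) (z : En n) :
    -(a * ‖z‖ ^ 2) ≤ H2 w x z := by
  have h := second_test (fun s : ℝ => w (x + s • z) + a / 2 * ‖x + s • z - y‖ ^ 2)
    (fun s => fderiv ℝ w (x + s • z) z + a / 2 * (2 * (inner ℝ (x - y) z + s * ‖z‖ ^ 2)))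
    (H2 w x z + a * ‖z‖ ^ 2) ?_ ?_ (line_min z hm)
  · linarith
  · filter_upwards [line_near (z := z) hw] with s hs
    exact (line_deriv1 hs).add ((q_deriv x y z s).const_mul _)
  · have h1 := line_deriv2 (w := w) (x := x) (z := z) (s := 0) (by simpa using hw)
    have h2 := (((hasDerivAt_id (0:ℝ)).mul_const (‖z‖ ^ 2)).const_add (inner ℝ (x - y) z)).const_mul (2:ℝ)
    have h3 := h1.add (h2.const_mul (a / 2))
    refine h3.congr_deriv ?_
    simp
    ring

theorem contact_grad {n : ℕ} {w : En n → ℝ} {x y : En n} {a : ℝ} (hw : ContDiffAt ℝ 2 w x)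
    (hm : IsLocalMin (fun z => w z + a / 2 * ‖z - y‖ ^ 2) x) (z : En n) :
    fderiv ℝ w x z = a * inner ℝ (y - x) z := by
  have h0 : DifferentiableAt ℝ w (x + (0:ℝ) • z) := by
    simpa using hw.differentiableAt (by norm_num)
  have h1 := (line_deriv1 h0).add ((q_deriv x y z 0).const_mul (a / 2))
  have h2 := (line_min z hm).hasDerivAt_eq_zero h1
  have : inner ℝ (y - x) z = - inner ℝ (x - y) z := by rw [← inner_neg_left, neg_sub]
  rw [this]
  simp at h2
  linarith

theorem barrier_hess {n : ℕ} {w : En n → ℝ} {x y x0 : En n} {a k : ℝ} {m : ℕ}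
    (hw : ContDiffAt ℝ 2 w x) (hx : x ≠ x0)
    (hm : IsLocalMin (fun z => (w z + a / 2 * ‖z - y‖ ^ 2) - k * ((‖z - x0‖ ^ 2) ^ m)⁻¹) x)
    (z : En n) :
    k * (4 * m * (m + 1) * ((‖x - x0‖ ^ 2) ^ (m + 2))⁻¹ * (inner ℝ (x - x0) z) ^ 2
      - 2 * m * ((‖x - x0‖ ^ 2) ^ (m + 1))⁻¹ * ‖z‖ ^ 2) - a * ‖z‖ ^ 2 ≤ H2 w x z := by
  have hQ : 0 < ‖x - x0‖ ^ 2 := by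
    have := norm_pos_iff.2 (sub_ne_zero.2 hx)
    positivity
  have hcont : Continuous (fun s : ℝ => ‖x + s • z - x0‖ ^ 2) := by fun_prop
  have hev : ∀ᶠ s in 𝓝 (0:ℝ), 0 < ‖x + s • z - x0‖ ^ 2 :=
    hcont.continuousAt.eventually (lt_mem_nhds (by simpa using hQ))
  set q : ℝ → ℝ := fun s => ‖x + s • z - x0‖ ^ 2 with hq
  set q' : ℝ → ℝ := fun s => 2 * (inner ℝ (x - x0) z + s * ‖z‖ ^ 2) with hq'
  have dq : ∀ s, HasDerivAt q (q' s) s := fun s => q_deriv x x0 z s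
  have dq' : ∀ s, HasDerivAt q' (2 * ‖z‖ ^ 2) s := by
    intro s
    have h2 := (((hasDerivAt_id s).mul_const (‖z‖ ^ 2)).const_add
      (inner ℝ (x - x0) z)).const_mul (2:ℝ)
    simpa using h2
  have dinv : ∀ (j : ℕ) (s : ℝ), 0 < q s →
      HasDerivAt (fun s => ((q s) ^ j)⁻¹) (-(j * ((q s) ^ (j + 1))⁻¹ * q' s)) s := by
    intro j s hs
    have h := ((dq s).pow j).inv (pow_pos hs j).ne'
    refine h.congr_deriv ?_
    rcases j with _ | j
    · simp
    · simp only [Nat.add_sub_cancel, Pi.pow_apply]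
      have := hs.ne'
      field_simp
      try ring
  have h := second_test
    (fun s : ℝ => (w (x + s • z) + a / 2 * ‖x + s • z - y‖ ^ 2) - k * ((q s) ^ m)⁻¹)
    (fun s => (fderiv ℝ w (x + s • z) z + a / 2 * (2 * (inner ℝ (x - y) z + s * ‖z‖ ^ 2)))
      - k * (-(m * ((q s) ^ (m + 1))⁻¹ * q' s)))
    (H2 w x z + a * ‖z‖ ^ 2 - k * (4 * m * (m + 1) * ((‖x - x0‖ ^ 2) ^ (m + 2))⁻¹ *
      (inner ℝ (x - x0) z) ^ 2 - 2 * m * ((‖x - x0‖ ^ 2) ^ (m + 1))⁻¹ * ‖z‖ ^ 2)) ?_ ?_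
      (line_min z hm)
  · linarith
  · filter_upwards [line_near (z := z) hw, hev] with s hs hs2
    exact ((line_deriv1 hs).add ((q_deriv x y z s).const_mul _)).sub ((dinv m s hs2).const_mul k)
  · have h1 := line_deriv2 (w := w) (x := x) (z := z) (s := 0) (by simpa using hw)
    have h2 := (((hasDerivAt_id (0:ℝ)).mul_const (‖z‖ ^ 2)).const_add (inner ℝ (x - y) z)).const_mul (2:ℝ)
    have h3 := h1.add (h2.const_mul (a / 2))
    have q0 : q 0 = ‖x - x0‖ ^ 2 := by simp [hq]
    have h4 := ((((dinv (m + 1) 0 (by rw [q0]; exact hQ)).const_mul (m:ℝ)).mul (dq' 0)).neg).const_mul k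
    refine (h3.sub h4).congr_deriv ?_
    have q0' : q' 0 = 2 * inner ℝ (x - x0) z := by simp [hq']
    rw [q0, q0']
    simp
    ring

theorem det_le_pow {n : ℕ} (T : En n →L[ℝ] En n) (C : ℝ) (hC : 0 ≤ C)
    (h : ∀ z, ‖T z‖ ≤ C * ‖z‖) : |T.det| ≤ C ^ n := by
  have h1 := Measure.addHaar_image_continuousLinearMap (volume : Measure (En n)) T (closedBall 0 1)
  have h2 : T '' closedBall 0 1 ⊆ closedBall 0 C := by
    rintro _ ⟨z, hz, rfl⟩
    simp only [mem_closedBall, dist_zero_right] at hz ⊢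
    exact (h z).trans (by nlinarith)
  have h3 : ENNReal.ofReal |T.det| * volume (closedBall (0 : En n) 1)
      ≤ ENNReal.ofReal (C ^ n) * volume (closedBall (0 : En n) 1) := by
    have := measure_mono (μ := (volume : Measure (En n))) h2
    rw [Measure.addHaar_closedBall' _ _ hC, h1] at this
    simpa using this
  have hpos : volume (closedBall (0 : En n) 1) ≠ 0 :=
    (measure_closedBall_pos _ _ one_pos).ne'
  have hfin : volume (closedBall (0 : En n) 1) ≠ ∞ := measure_closedBall_lt_top.ne
  rw [ENNReal.mul_le_mul_iff_left hpos hfin] at h3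
  exact (ENNReal.ofReal_le_ofReal_iff (by positivity)).1 h3

/-- Riesz representation as a real continuous linear map. -/
def rieszCLM (n : ℕ) : (StrongDual ℝ (En n)) →L[ℝ] En n :=
  LinearMap.mkContinuous
    { toFun := fun l => (InnerProductSpace.toDual ℝ (En n)).symm l
      map_add' := fun a b => map_add _ a b
      map_smul' := fun c b => by simp } 1 (fun l => by simp)

theorem rieszCLM_apply (n : ℕ) (l : StrongDual ℝ (En n)) :
    rieszCLM n l = (InnerProductSpace.toDual ℝ (En n)).symm l := rfl

/-- Gradient map whose values are the vertices of touching paraboloids. -/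
def Ymap {n : ℕ} (w : En n → ℝ) (a : ℝ) (x : En n) : En n :=
  x + a⁻¹ • (InnerProductSpace.toDual ℝ (En n)).symm (fderiv ℝ w x)

def Ymap' {n : ℕ} (w : En n → ℝ) (a : ℝ) (x : En n) : En n →L[ℝ] En n :=
  ContinuousLinearMap.id ℝ (En n) + a⁻¹ •
    ((rieszCLM n).comp (fderiv ℝ (fderiv ℝ w) x))

theorem Ymap_deriv {n : ℕ} {w : En n → ℝ} {a : ℝ} {x : En n} (hw : ContDiffAt ℝ 2 w x) :
    HasFDerivAt (Ymap w a) (Ymap' w a x) x := by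
  have h1 := (cda_fderiv hw).hasFDerivAt
  have h2 := (rieszCLM n).hasFDerivAt.comp x h1
  exact (hasFDerivAt_id x).add (h2.const_smul a⁻¹)

theorem Ymap_contact {n : ℕ} {w : En n → ℝ} {x y : En n} {a : ℝ} (ha : 0 < a)
    (hw : ContDiffAt ℝ 2 w x)
    (hm : IsLocalMin (fun z => w z + a / 2 * ‖z - y‖ ^ 2) x) : Ymap w a x = y := by
  have h : (InnerProductSpace.toDual ℝ (En n)).symm (fderiv ℝ w x) = a • (y - x) := by
    apply ext_inner_right ℝ
    intro z
    rw [InnerProductSpace.toDual_symm_apply, contact_grad hw hm z, inner_smul_left]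
    simp
  rw [Ymap, h, smul_smul, inv_mul_cancel₀ ha.ne', one_smul]
  abel

theorem Ymap'_bound {n : ℕ} {w : En n → ℝ} {x y : En n} {a L : ℝ} (ha : 0 < a) (hL : 0 ≤ L)
    (hw : ContDiffAt ℝ 2 w x) (hs : SS L w x)
    (hm : IsLocalMin (fun z => w z + a / 2 * ‖z - y‖ ^ 2) x) (z : En n) :
    ‖Ymap' w a x z‖ ≤ (1 + L) * ‖z‖ := by
  have hlow := contact_hess hw hm
  have hup := hs a ha.le hlow
  set D := fderiv ℝ (fderiv ℝ w) x with hD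
  have hsym : ∀ p q, D p q = D q p := by
    intro p q
    exact (hw.isSymmSndFDerivAt (by simp)) p q
  have hinner : ∀ p q, inner ℝ (Ymap' w a x p) q = inner ℝ p q + a⁻¹ * D p q := by
    intro p q
    simp only [Ymap', add_apply, smul_apply,
      inner_add_left, inner_smul_left]
    simp [InnerProductSpace.toDual_symm_apply, hD, rieszCLM_apply]
  -- the quadratic form
  have hquad : ∀ p, |inner ℝ p p + a⁻¹ * D p p| ≤ (1 + L) * ‖p‖ ^ 2 := by
    intro p
    have e : inner ℝ p p + a⁻¹ * D p p = a⁻¹ * (a * ‖p‖ ^ 2 + D p p) := by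
      rw [real_inner_self_eq_norm_sq]; field_simp
    have l := hlow p
    have u := hup p
    change -(a * ‖p‖ ^ 2) ≤ D p p at l
    change D p p ≤ L * a * ‖p‖ ^ 2 at u
    rw [e, abs_of_nonneg (mul_nonneg (by positivity) (by linarith))]
    rw [inv_mul_le_iff₀ ha]
    nlinarith
  have hpol : ∀ p q, |inner ℝ p q + a⁻¹ * D p q| ≤ (1 + L) * (‖p‖ ^ 2 + ‖q‖ ^ 2) / 2 := by
    intro p q
    have e : inner ℝ p q + a⁻¹ * D p q = ((inner ℝ (p + q) (p + q) + a⁻¹ * D (p + q) (p + q))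
        - (inner ℝ (p - q) (p - q) + a⁻¹ * D (p - q) (p - q))) / 4 := by
      simp only [map_add, map_sub, add_apply, sub_apply,
        inner_add_left, inner_add_right, inner_sub_left, inner_sub_right]
      rw [hsym q p, real_inner_comm p q]
      ring
    have h1 := hquad (p + q)
    have h2 := hquad (p - q)
    have h3 := parallelogram_law_with_norm ℝ p q
    rw [e]
    rw [abs_le] at h1 h2 ⊢
    constructor <;> nlinarith
  by_cases hz : z = 0
  · simp [hz]
  set T := Ymap' w a x z with hT
  by_cases hT0 : T = 0
  · rw [hT0, norm_zero]; positivity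
  have nz : 0 < ‖z‖ := norm_pos_iff.2 hz
  have nT : 0 < ‖T‖ := norm_pos_iff.2 hT0
  have h := hpol z ((‖z‖ / ‖T‖) • T)
  rw [← hinner, ← hT, inner_smul_right, real_inner_self_eq_norm_sq, norm_smul] at h
  have e1 : ‖z‖ / ‖T‖ * ‖T‖ ^ 2 = ‖z‖ * ‖T‖ := by field_simp
  have e2 : ‖‖z‖ / ‖T‖‖ * ‖T‖ = ‖z‖ := by
    rw [norm_div, norm_norm, norm_norm]; field_simp
  rw [e1, e2, abs_of_nonneg (by positivity)] at h
  have : ‖z‖ * ‖T‖ ≤ ‖z‖ * ((1 + L) * ‖z‖) := by nlinarith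
  exact le_of_mul_le_mul_left this nz

/-- Measure estimate for vertices by contact points. -/
theorem vertex_measure {n : ℕ} {w : En n → ℝ} {a L : ℝ} (ha : 0 < a) (hL : 0 ≤ L)
    {S V : Set (En n)} (hS : MeasurableSet S)
    (hw : ∀ x ∈ S, ContDiffAt ℝ 2 w x) (hs : ∀ x ∈ S, SS L w x)
    (hc : ∀ x ∈ S, ∃ y, IsLocalMin (fun z => w z + a / 2 * ‖z - y‖ ^ 2) x)
    (hV : ∀ y ∈ V, ∃ x ∈ S, IsLocalMin (fun z => w z + a / 2 * ‖z - y‖ ^ 2) x) :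
    volume V ≤ ENNReal.ofReal ((1 + L) ^ n) * volume S := by
  have h1 : V ⊆ Ymap w a '' S := by
    intro y hy
    obtain ⟨x, hx, hm⟩ := hV y hy
    exact ⟨x, hx, Ymap_contact ha (hw x hx) hm⟩
  refine (measure_mono h1).trans ?_
  refine (addHaar_image_le_lintegral_abs_det_fderiv volume hS
    (fun x hx => (Ymap_deriv (hw x hx)).hasFDerivWithinAt)).trans ?_
  refine (setLIntegral_mono' hS (g := fun _ => ENNReal.ofReal ((1 + L) ^ n)) ?_).trans ?_
  · intro x hx
    obtain ⟨y, hm⟩ := hc x hx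
    exact ENNReal.ofReal_le_ofReal
      (det_le_pow _ _ (by linarith) (Ymap'_bound ha hL (hw x hx) (hs x hx) hm))
  · simp

/-- Contact set. -/
def Aset {n : ℕ} (w : En n → ℝ) (R ρ a : ℝ) : Set (En n) :=
  {x | x ∈ closedBall 0 ρ ∧ ∃ y ∈ closedBall (0 : En n) R, ∀ z ∈ ball (0 : En n) R,
    w x + a / 2 * ‖x - y‖ ^ 2 ≤ w z + a / 2 * ‖z - y‖ ^ 2}

theorem Aset_compact {n : ℕ} {w : En n → ℝ} {R ρ a : ℝ} (hR : ρ < R)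
    (hw : ContinuousOn w (ball 0 R)) : IsCompact (Aset w R ρ a) := by
  have hsub : closedBall (0 : En n) ρ ⊆ ball 0 R := closedBall_subset_ball hR
  set C : Set (En n × En n) := closedBall 0 ρ ×ˢ closedBall 0 R with hCdef
  have hC : IsCompact C := (isCompact_closedBall _ _).prod (isCompact_closedBall _ _)
  have hK : IsClosed (C ∩ ⋂ z ∈ ball (0 : En n) R, {p ∈ C | w p.1 + a / 2 * ‖p.1 - p.2‖ ^ 2
      ≤ w z + a / 2 * ‖z - p.2‖ ^ 2}) := by
    refine hC.isClosed.inter (isClosed_biInter fun z _ => ?_)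
    refine hC.isClosed.isClosed_le ?_ ?_
    · refine ContinuousOn.add ?_ (by fun_prop)
      exact hw.comp continuousOn_fst (fun p hp => hsub hp.1)
    · fun_prop
  have hKc := hC.of_isClosed_subset hK inter_subset_left
  have : Aset w R ρ a = Prod.fst '' (C ∩ ⋂ z ∈ ball (0 : En n) R,
      {p ∈ C | w p.1 + a / 2 * ‖p.1 - p.2‖ ^ 2 ≤ w z + a / 2 * ‖z - p.2‖ ^ 2}) := by
    ext x
    constructor
    · rintro ⟨hx, y, hy, h⟩
      refine ⟨(x, y), ⟨⟨hx, hy⟩, ?_⟩, rfl⟩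
      simp only [mem_iInter]
      exact fun z hz => ⟨⟨hx, hy⟩, h z hz⟩
    · rintro ⟨⟨x', y⟩, ⟨⟨hx, hy⟩, h⟩, rfl⟩
      simp only [mem_iInter] at h
      exact ⟨hx, y, hy, fun z hz => (h z hz).2⟩
  rw [this]
  exact hKc.image continuous_fst

theorem min_local {n : ℕ} {f : En n → ℝ} {R : ℝ} {x : En n} (hx : x ∈ ball (0 : En n) R)
    (h : ∀ z ∈ ball (0 : En n) R, f x ≤ f z) : IsLocalMin f x := by
  filter_upwards [isOpen_ball.mem_nhds hx] with z hz using h z hz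

theorem barrier_point {n : ℕ} {w : En n → ℝ} {R a L r : ℝ} {m : ℕ} (hL : 0 ≤ L)
    (hm : 1 + L ≤ m) (ha : 0 < a) (hr : 0 < r)
    (hw : ∀ x ∈ ball (0 : En n) R, ContDiffAt ℝ 2 w x)
    (hs : ∀ x ∈ ball (0 : En n) R, SS L w x) {x0 x1 y1 : En n}
    (hsub : closedBall x0 (7 * r) ⊆ ball (0 : En n) R) (hd : dist x1 x0 ≤ 6 * r)
    (hmin : ∀ z ∈ ball (0 : En n) R, w x1 + a / 2 * ‖x1 - y1‖ ^ 2 ≤ w z + a / 2 * ‖z - y1‖ ^ 2) :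
    ∃ x2 ∈ closedBall x0 (r / 4), w x2 + a / 2 * ‖x2 - y1‖ ^ 2 ≤
      w x1 + a / 2 * ‖x1 - y1‖ ^ 2 + 49 ^ (m + 1) * 16 ^ m * a * r ^ 2 := by
  by_contra hcon
  push Not at hcon
  set v : En n → ℝ := fun z => w z + a / 2 * ‖z - y1‖ ^ 2 with hv
  set k : ℝ := a * (49 * r ^ 2) ^ (m + 1) with hk
  have hkpos : 0 < k := by positivity
  have hm1 : (1:ℝ) ≤ m := by linarith
  have hm0 : m ≠ 0 := by
    rintro rfl
    norm_num at hm1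
  set f : En n → ℝ := fun z => v z - k * ((‖z - x0‖ ^ 2) ^ m)⁻¹ with hf
  set K : Set (En n) := closedBall x0 (7 * r) \ ball x0 (r / 4) with hK
  have hKc : IsCompact K := (isCompact_closedBall _ _).diff isOpen_ball
  have hnorm : ∀ z ∈ K, r / 4 ≤ ‖z - x0‖ ∧ ‖z - x0‖ ≤ 7 * r := by
    rintro z ⟨h1, h2⟩
    rw [mem_closedBall, dist_eq_norm] at h1
    rw [mem_ball, dist_eq_norm, not_lt] at h2
    exact ⟨h2, h1⟩
  have hwc : ContinuousOn w K := fun z hz => (hw z (hsub hz.1)).continuousAt.continuousWithinAt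
  have hfc : ContinuousOn f K := by
    refine (hwc.add (by fun_prop)).sub (continuousOn_const.mul ?_)
    refine ContinuousOn.inv₀ (by fun_prop) ?_
    intro z hz
    have := (hnorm z hz).1
    have : 0 < ‖z - x0‖ := by linarith
    positivity
  have hx1 : x1 ∈ K := by
    refine ⟨mem_closedBall.2 (by linarith), fun h => ?_⟩
    have := hcon x1 (ball_subset_closedBall h)
    have h0 : 0 < 49 ^ (m + 1) * 16 ^ m * a * r ^ 2 := by positivity
    linarith
  obtain ⟨x, hxK, hxmin⟩ := hKc.exists_isMinOn ⟨x1, hx1⟩ hfc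
  have hfx : f x ≤ f x1 := hxmin hx1
  obtain ⟨hn1, hn2⟩ := hnorm x hxK
  have hnpos : 0 < ‖x - x0‖ := by linarith
  have hvx : v x1 ≤ v x := hmin x (hsub hxK.1)
  have hn1pos : 0 < ‖x1 - x0‖ := by have := (hnorm x1 hx1).1; linarith
  have hd' : ‖x1 - x0‖ ≤ 6 * r := by rwa [← dist_eq_norm]
  -- outer boundary excluded
  have hout : ‖x - x0‖ < 7 * r := by
    refine lt_of_le_of_ne hn2 fun he => ?_
    have h1 : ((‖x - x0‖ ^ 2) ^ m)⁻¹ < ((‖x1 - x0‖ ^ 2) ^ m)⁻¹ := by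
      apply inv_strictAnti₀ (by positivity)
      apply pow_lt_pow_left₀ _ (by positivity) hm0
      apply pow_lt_pow_left₀ _ (by positivity) two_ne_zero
      linarith
    have := mul_lt_mul_of_pos_left h1 hkpos
    simp only [hf] at hfx
    linarith
  -- inner boundary excluded
  have hin : r / 4 < ‖x - x0‖ := by
    refine lt_of_le_of_ne hn1 fun he => ?_
    have h1 := hcon x (by rw [mem_closedBall, dist_eq_norm]; exact he.ge)
    have h2 : k * ((‖x - x0‖ ^ 2) ^ m)⁻¹ = 49 ^ (m + 1) * 16 ^ m * a * r ^ 2 := by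
      have e16 : ((r / 4) ^ 2) = r ^ 2 / 16 := by ring
      rw [← he, hk, e16, div_pow, mul_pow, pow_succ (r ^ 2) m]
      field_simp
    have h3 : 0 < k * ((‖x1 - x0‖ ^ 2) ^ m)⁻¹ := by positivity
    simp only [hf] at hfx
    change v x1 + _ < v x at h1
    linarith
  have hlm : IsLocalMin f x := by
    have hnb : K ∈ 𝓝 x := by
      have ho : IsOpen (ball x0 (7 * r) \ closedBall x0 (r / 4)) :=
        isOpen_ball.sdiff isClosed_closedBall
      refine mem_of_superset (ho.mem_nhds ⟨?_, ?_⟩) ?_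
      · rwa [mem_ball, dist_eq_norm]
      · rw [mem_closedBall, dist_eq_norm, not_le]; exact hin
      · exact sdiff_subset_sdiff ball_subset_closedBall ball_subset_closedBall
    filter_upwards [hnb] with z hz using hxmin hz
  have hxR := hsub hxK.1
  have hx0 : x ≠ x0 := by rintro rfl; simp at hnpos
  have hh := barrier_hess (hw x hxR) hx0 hlm
  set Q : ℝ := ‖x - x0‖ ^ 2 with hQ
  have hQpos : 0 < Q := by positivity
  set β : ℝ := k * (Q ^ (m + 1))⁻¹ with hβ
  have hβpos : 0 < β := by positivity
  have hβa : a ≤ β := by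
    rw [hβ, hk, ← div_eq_mul_inv, le_div_iff₀ (by positivity)]
    have : Q ≤ 49 * r ^ 2 := by rw [hQ]; nlinarith
    gcongr
  have hkQ : k * (Q ^ (m + 2))⁻¹ = β / Q := by
    rw [hβ, pow_succ Q (m + 1)]; field_simp
  have hh' : ∀ z, 4 * m * (m + 1) * (β / Q) * (inner ℝ (x - x0) z) ^ 2 - (2 * m * β + a) * ‖z‖ ^ 2
      ≤ H2 w x z := by
    intro z
    refine le_trans (le_of_eq ?_) (hh z)
    rw [← hkQ, hβ]; ring
  have h1 := hs x hxR (2 * m * β + a) (by positivity) (fun z => by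
    refine le_trans ?_ (hh' z)
    have : 0 ≤ 4 * m * (m + 1) * (β / Q) * (inner ℝ (x - x0) z) ^ 2 := by positivity
    linarith) (x - x0)
  have h2 := (hh' (x - x0)).trans h1
  rw [real_inner_self_eq_norm_sq, ← hQ] at h2
  have e : 4 * m * (m + 1) * (β / Q) * Q ^ 2 = 4 * m * (m + 1) * β * Q := by field_simp
  rw [e] at h2
  have h3 : 4 * m * (m + 1) * β ≤ (1 + L) * (2 * m * β + a) := by
    have : (4 * m * (m + 1) * β) * Q ≤ ((1 + L) * (2 * m * β + a)) * Q := by linarith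
    exact le_of_mul_le_mul_right this hQpos
  have h4 : (1 + L) * (2 * m * β + a) ≤ m * (2 * m * β + β) := by
    gcongr
  nlinarith [mul_pos (mul_pos (by linarith : (0:ℝ) < m) (by linarith : (0:ℝ) < m)) hβpos,
    mul_pos (by linarith : (0:ℝ) < m) hβpos]

theorem parab_combine {n : ℕ} (y1 y z x : En n) (a M : ℝ) (hM : 0 < M) :
    (1 + M) * a / 2 * ‖z - (1 + M)⁻¹ • (y1 + M • y)‖ ^ 2
      - (1 + M) * a / 2 * ‖x - (1 + M)⁻¹ • (y1 + M • y)‖ ^ 2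
    = (a / 2 * ‖z - y1‖ ^ 2 + M * a / 2 * ‖z - y‖ ^ 2)
      - (a / 2 * ‖x - y1‖ ^ 2 + M * a / 2 * ‖x - y‖ ^ 2) := by
  simp only [norm_sub_sq_real, inner_smul_right, inner_add_right]
  have : (1 + M) ≠ 0 := by positivity
  field_simp
  ring

theorem Aset_mono {n : ℕ} {w : En n → ℝ} {R ρ a M : ℝ} (hρ : ρ < R) (ha : 0 < a) (hM : 0 < M) :
    Aset w R ρ a ⊆ Aset w R ρ ((1 + M) * a) := by
  rintro x ⟨hx, y, hy, h⟩
  refine ⟨hx, (1 + M)⁻¹ • (y + M • x), ?_, ?_⟩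
  · have := (convex_closedBall (0 : En n) R) hy (closedBall_subset_closedBall hρ.le hx)
      (a := (1 + M)⁻¹) (b := (1 + M)⁻¹ * M) (by positivity) (by positivity) (by field_simp)
    simpa [smul_add, smul_smul] using this
  · intro z hz
    have h1 := h z hz
    have h2 := parab_combine y x z x a M hM
    rw [sub_self, norm_zero] at h2
    have : 0 ≤ M * a / 2 * ‖z - x‖ ^ 2 := by positivity
    linarith

theorem propagation {n : ℕ} {w : En n → ℝ} {R ρ a L r M : ℝ} {m : ℕ} (hL : 0 ≤ L)
    (hm : 1 + L ≤ m) (ha : 0 < a) (hr : 0 < r) (hρ : ρ < R)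
    (hM : M = 64 * (49 ^ (m + 1) * 16 ^ m))
    (hw : ∀ x ∈ ball (0 : En n) R, ContDiffAt ℝ 2 w x)
    (hs : ∀ x ∈ ball (0 : En n) R, SS L w x) {x0 x1 : En n}
    (hsub : closedBall x0 (7 * r) ⊆ ball (0 : En n) R) (hd : dist x1 x0 ≤ 6 * r)
    (hsubρ : closedBall x0 r ⊆ closedBall 0 ρ)
    (hx1 : x1 ∈ Aset w R ρ a) :
    ENNReal.ofReal ((M / (8 * (1 + M) * (1 + L))) ^ n) * volume (closedBall x0 r) ≤
      volume (Aset w R ρ ((1 + M) * a) ∩ closedBall x0 r) := by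
  have hMpos : 0 < M := by rw [hM]; positivity
  obtain ⟨hx1ρ, y1, hy1, hmin⟩ := hx1
  obtain ⟨x2, hx2, hvx2⟩ := barrier_point hL hm ha hr hw hs hsub hd hmin
  have hwc : ContinuousOn w (ball (0 : En n) R) := fun z hz =>
    (hw z hz).continuousAt.continuousWithinAt
  have hsubr : closedBall x0 r ⊆ ball (0 : En n) R :=
    (closedBall_subset_closedBall (by linarith)).trans hsub
  set C1 : ℝ := 49 ^ (m + 1) * 16 ^ m with hC1
  -- key: for each y near x2 there is a contact point
  have key : ∀ y ∈ closedBall x2 (r / 8), ∃ x ∈ closedBall x0 r, ∀ z ∈ ball (0 : En n) R,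
      w x + (1 + M) * a / 2 * ‖x - (1 + M)⁻¹ • (y1 + M • y)‖ ^ 2 ≤
      w z + (1 + M) * a / 2 * ‖z - (1 + M)⁻¹ • (y1 + M • y)‖ ^ 2 := by
    intro y hy
    rw [mem_closedBall] at hy hx2
    have hyx0 : closedBall y (r / 4) ⊆ closedBall x0 r := by
      apply closedBall_subset_closedBall'
      have := dist_triangle y x2 x0
      linarith
    set g : En n → ℝ := fun z => w z + (a / 2 * ‖z - y1‖ ^ 2 + M * a / 2 * ‖z - y‖ ^ 2) with hg
    have hgc : ContinuousOn g (closedBall y (r / 4)) :=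
      (hwc.mono (hyx0.trans hsubr)).add (by fun_prop)
    have hx2y : x2 ∈ closedBall y (r / 4) := by
      rw [mem_closedBall, dist_comm]; linarith
    obtain ⟨x, hx, hxm⟩ := (isCompact_closedBall y (r / 4)).exists_isMinOn ⟨x2, hx2y⟩ hgc
    refine ⟨x, hyx0 hx, fun z hz => ?_⟩
    have hgz : g x ≤ g z := by
      by_cases hzy : z ∈ closedBall y (r / 4)
      · exact hxm hzy
      · have h1 : g x ≤ g x2 := hxm hx2y
        refine h1.trans ?_
        have h2 := hmin z hz
        rw [mem_closedBall, dist_eq_norm, not_le] at hzy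
        have h3 : ‖x2 - y‖ ≤ r / 8 := by rwa [← dist_eq_norm, dist_comm]
        have h4 : ‖x2 - y‖ ^ 2 ≤ r ^ 2 / 64 := by nlinarith [norm_nonneg (x2 - y)]
        have h5 : r ^ 2 / 16 ≤ ‖z - y‖ ^ 2 := by nlinarith
        have hMa : 0 < M * a / 2 := by positivity
        have h6 : M * a / 2 * ‖x2 - y‖ ^ 2 ≤ M * a / 2 * (r ^ 2 / 64) := by gcongr
        have h7 : M * a / 2 * (r ^ 2 / 16) ≤ M * a / 2 * ‖z - y‖ ^ 2 := by gcongr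
        have h8 : C1 * a * r ^ 2 + M * a / 2 * (r ^ 2 / 64) ≤ M * a / 2 * (r ^ 2 / 16) := by
          have : 0 < C1 * a * r ^ 2 := by positivity
          rw [hM]
          nlinarith
        simp only [hg]
        linarith
    have h2 := parab_combine y1 y z x a M hMpos
    simp only [hg] at hgz
    linarith
  have hS : MeasurableSet (Aset w R ρ ((1 + M) * a) ∩ closedBall x0 r) :=
    ((Aset_compact hρ hwc).isClosed.inter isClosed_closedBall).measurableSet
  have hM1 : (1 + M) ≠ 0 := by positivity
  have hloc : ∀ (x y : En n), x ∈ ball (0 : En n) R → (∀ z ∈ ball (0 : En n) R,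
      w x + (1 + M) * a / 2 * ‖x - y‖ ^ 2 ≤ w z + (1 + M) * a / 2 * ‖z - y‖ ^ 2) →
      IsLocalMin (fun z => w z + (1 + M) * a / 2 * ‖z - y‖ ^ 2) x :=
    fun x y hx h => min_local hx h
  have hmeas := vertex_measure (w := w) (a := (1 + M) * a) (L := L) (by positivity) hL
    (V := closedBall ((1 + M)⁻¹ • (y1 + M • x2)) (M / (8 * (1 + M)) * r)) hS
    (fun x hx => hw x (hsubr hx.2)) (fun x hx => hs x (hsubr hx.2)) ?_ ?_
  · have e1 : volume (closedBall ((1 + M)⁻¹ • (y1 + M • x2)) (M / (8 * (1 + M)) * r)) =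
        ENNReal.ofReal ((M / (8 * (1 + M))) ^ n) * volume (closedBall x0 r) := by
      rw [Measure.addHaar_closedBall_mul _ _ (by positivity) hr.le,
        Measure.addHaar_closedBall_center volume x0]
      simp
    rw [e1] at hmeas
    have hp : (0:ℝ) < (1 + L) ^ n := by positivity
    have e2 : (M / (8 * (1 + M) * (1 + L))) ^ n
        = ((1 + L) ^ n)⁻¹ * (M / (8 * (1 + M))) ^ n := by
      rw [← inv_pow, ← mul_pow]; congr 1; field_simp
    rw [e2, ENNReal.ofReal_mul (by positivity), mul_assoc]
    calc _ ≤ ENNReal.ofReal ((1 + L) ^ n)⁻¹ * (ENNReal.ofReal ((1 + L) ^ n) *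
          volume (Aset w R ρ ((1 + M) * a) ∩ closedBall x0 r)) := by gcongr
      _ = _ := by
        rw [← mul_assoc, ← ENNReal.ofReal_mul (by positivity), inv_mul_cancel₀ hp.ne']
        simp
  · rintro x ⟨⟨hx, y, hy, h⟩, hx'⟩
    exact ⟨y, hloc x y (hsubr hx') h⟩
  · intro y' hy'
    set y : En n := M⁻¹ • ((1 + M) • y' - y1) with hy
    have hyy : (1 + M)⁻¹ • (y1 + M • y) = y' := by
      rw [hy, smul_smul, mul_inv_cancel₀ hMpos.ne', one_smul, add_sub_cancel, smul_smul,
        inv_mul_cancel₀ hM1, one_smul]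
    have hyx2 : y ∈ closedBall x2 (r / 8) := by
      have e : y - x2 = ((1 + M) / M) • (y' - (1 + M)⁻¹ • (y1 + M • x2)) := by
        rw [smul_sub, smul_smul, hy, smul_sub, smul_add, smul_smul, smul_smul]
        have c1 : M⁻¹ * (1 + M) = (1 + M) / M := by field_simp
        have c2 : (1 + M) / M * (1 + M)⁻¹ = M⁻¹ := by field_simp
        have c3 : M⁻¹ * M = 1 := by field_simp
        rw [c1, c2, c3, one_smul]
        abel
      rw [mem_closedBall, dist_eq_norm] at hy' ⊢
      rw [e, norm_smul, Real.norm_of_nonneg (by positivity)]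
      calc (1 + M) / M * ‖y' - (1 + M)⁻¹ • (y1 + M • x2)‖
          ≤ (1 + M) / M * (M / (8 * (1 + M)) * r) := by gcongr
        _ = r / 8 := by field_simp
    obtain ⟨x, hx, hxz⟩ := key y hyx2
    rw [hyy] at hxz
    refine ⟨x, ⟨⟨hsubρ hx, y', ?_, hxz⟩, hx⟩, hloc x y' (hsubr hx) hxz⟩
    have hyR : y ∈ closedBall (0 : En n) R := by
      refine ball_subset_closedBall (hsubr ?_)
      refine closedBall_subset_closedBall' ?_ hyx2
      rw [mem_closedBall] at hx2
      linarith
    have := (convex_closedBall (0 : En n) R) hy1 hyR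
      (a := (1 + M)⁻¹) (b := (1 + M)⁻¹ * M) (by positivity) (by positivity) (by field_simp)
    rw [← hyy]
    simpa [smul_add, smul_smul] using this

theorem ink_spots {n : ℕ} {A A' : Set (En n)} {ρ c : ℝ} (hρ : 0 < ρ) (hA : IsClosed A)
    (hA' : IsClosed A') (hne : A.Nonempty) (hsub : A ⊆ closedBall 0 ρ) (hAA : A ⊆ A')
    (hc : 0 ≤ c)
    (hprop : ∀ (x : En n) (r : ℝ), 0 < r → r ≤ ρ / 2 → closedBall x r ⊆ closedBall 0 ρ →
      (∃ x1 ∈ A, dist x1 x ≤ 6 * r) →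
      ENNReal.ofReal c * volume (closedBall x r) ≤ volume (A' ∩ closedBall x r)) :
    (volume (ball 0 ρ \ A')).toReal ≤ (1 - c / 7 ^ n) * (volume (ball 0 ρ \ A)).toReal := by
  set U : Set (En n) := ball 0 ρ \ A with hU
  set d : En n → ℝ := fun x => infDist x A with hd
  set ctr : En n → En n := fun x => (1 - d x / (2 * ρ)) • x with hctr
  set B : En n → Set (En n) := fun x => closedBall (ctr x) (d x / 4) with hB
  have hdpos : ∀ x ∈ U, 0 < d x := fun x hx => (hA.notMem_iff_infDist_pos hne).1 hx.2
  have hdle : ∀ x ∈ U, d x ≤ 2 * ρ := by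
    intro x hx
    obtain ⟨x1, h1⟩ := hne
    have h2 := infDist_le_dist_of_mem (x := x) h1
    have h3 := hsub h1
    have h4 := hx.1
    rw [mem_closedBall] at h3
    rw [mem_ball] at h4
    have := dist_triangle_right x x1 0
    linarith
  have hcx : ∀ x ∈ U, dist x (ctr x) ≤ d x / 2 := by
    intro x hx
    have e : x - ctr x = (d x / (2 * ρ)) • x := by
      simp only [hctr, sub_smul, one_smul]; abel
    have h0 := hdpos x hx
    have h4 := hx.1
    rw [mem_ball, dist_zero_right] at h4
    rw [dist_eq_norm, e, norm_smul, Real.norm_of_nonneg (by positivity)]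
    calc d x / (2 * ρ) * ‖x‖ ≤ d x / (2 * ρ) * ρ := by gcongr
      _ = d x / 2 := by field_simp
  have hc0 : ∀ x ∈ U, ‖ctr x‖ ≤ ρ - d x / 2 := by
    intro x hx
    have h0 := hdle x hx
    have h4 := hx.1
    rw [mem_ball, dist_zero_right] at h4
    have h1 : 0 ≤ 1 - d x / (2 * ρ) := by
      rw [sub_nonneg, div_le_one (by positivity)]; exact h0
    simp only [hctr]
    rw [norm_smul, Real.norm_of_nonneg h1]
    calc (1 - d x / (2 * ρ)) * ‖x‖ ≤ (1 - d x / (2 * ρ)) * ρ := by gcongr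
      _ = ρ - d x / 2 := by field_simp
  have hBball : ∀ x ∈ U, B x ⊆ ball 0 ρ := by
    intro x hx
    refine closedBall_subset_ball' ?_
    have := hc0 x hx
    have := hdpos x hx
    rw [dist_zero_right]
    linarith
  have hBU : ∀ x ∈ U, B x ⊆ U := by
    intro x hx z hz
    refine ⟨hBball x hx hz, fun hzA => ?_⟩
    have h1 := infDist_le_dist_of_mem (x := x) hzA
    have h2 := hcx x hx
    have h3 := hdpos x hx
    simp only [hB, mem_closedBall] at hz
    have := dist_triangle_right x z (ctr x)
    change d x ≤ _ at h1
    linarith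
  obtain ⟨u, hut, hdisj, hcov⟩ := Vitali.exists_disjoint_subfamily_covering_enlargement B U
    (fun x => d x / 4) 2 (by norm_num) (fun x hx => by have := hdpos x hx; positivity) (ρ / 2)
    (fun x hx => by have := hdle x hx; linarith)
    (fun x hx => nonempty_closedBall.2 (by have := hdpos x hx; positivity))
  have hucount : u.Countable := by
    refine hdisj.countable_of_nonempty_interior ?_
    intro x hx
    have := hdpos x (hut hx)
    refine (nonempty_ball.2 (by positivity : 0 < d x / 4)).mono ball_subset_interior_closedBall
  have hcover : U ⊆ ⋃ x ∈ u, closedBall (ctr x) (7 * (d x / 4)) := by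
    intro x hx
    obtain ⟨b, hb, ⟨p, hp1, hp2⟩, hle⟩ := hcov x hx
    refine mem_biUnion hb ?_
    simp only [hB, mem_closedBall] at hp1 hp2
    rw [mem_closedBall]
    have h1 := hcx x hx
    have h2 := dist_triangle x (ctr x) (ctr b)
    have h3 := dist_triangle_left (ctr x) (ctr b) p
    have h4 := hdpos b (hut hb)
    linarith
  have hvol7 : ∀ x ∈ u, volume (closedBall (ctr x) (7 * (d x / 4))) =
      ENNReal.ofReal (7 ^ n) * volume (B x) := by
    intro x hx
    have := hdpos x (hut hx)
    rw [Measure.addHaar_closedBall_mul _ _ (by norm_num) (by positivity), hB]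
    simp only
    rw [Measure.addHaar_closedBall_center volume (ctr x)]
    simp
  have hpx : ∀ x ∈ u, ENNReal.ofReal c * volume (B x) ≤ volume (A' ∩ B x) := by
    intro x hx
    have hxU := hut hx
    have h0 := hdpos x hxU
    refine hprop (ctr x) (d x / 4) (by positivity) (by have := hdle x hxU; linarith)
      ((hBball x hxU).trans ball_subset_closedBall) ?_
    obtain ⟨x1, h1, h2⟩ := hA.exists_infDist_eq_dist hne x
    refine ⟨x1, h1, ?_⟩
    have h3 := hcx x hxU
    have h4 := dist_triangle_left x1 (ctr x) x
    change d x = _ at h2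
    linarith
  have h1 : volume U ≤ ENNReal.ofReal (7 ^ n) * ∑' x : u, volume (B x) := by
    calc volume U ≤ volume (⋃ x ∈ u, closedBall (ctr x) (7 * (d x / 4))) := measure_mono hcover
      _ ≤ ∑' x : u, volume (closedBall (ctr x) (7 * (d x / 4))) :=
        measure_biUnion_le _ hucount _
      _ = ∑' x : u, ENNReal.ofReal (7 ^ n) * volume (B x) :=
        tsum_congr fun x => hvol7 x x.2
      _ = _ := ENNReal.tsum_mul_left
  have h2 : ENNReal.ofReal c * ∑' x : u, volume (B x) ≤ volume (U ∩ A') := by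
    calc _ = ∑' x : u, ENNReal.ofReal c * volume (B x) := ENNReal.tsum_mul_left.symm
      _ ≤ ∑' x : u, volume (A' ∩ B x) := ENNReal.tsum_le_tsum fun x => hpx x x.2
      _ = volume (⋃ x ∈ u, A' ∩ B x) := by
        refine (measure_biUnion (μ := volume) (f := fun x => A' ∩ B x) hucount ?_ ?_).symm
        · exact hdisj.mono fun x => inter_subset_right
        · intro x _
          exact (hA'.inter isClosed_closedBall).measurableSet
      _ ≤ volume (U ∩ A') := by
        refine measure_mono (iUnion₂_subset fun x hx => ?_)
        exact fun z hz => ⟨hBU x (hut hx) hz.2, hz.1⟩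
  have h3 : ENNReal.ofReal (c / 7 ^ n) * volume U ≤ volume (U ∩ A') := by
    calc _ ≤ ENNReal.ofReal (c / 7 ^ n) * (ENNReal.ofReal (7 ^ n) * ∑' x : u, volume (B x)) := by
          gcongr
      _ = ENNReal.ofReal c * ∑' x : u, volume (B x) := by
          rw [← mul_assoc, ← ENNReal.ofReal_mul (by positivity)]
          congr 2
          field_simp
      _ ≤ _ := h2
  have hUfin : volume U ≠ ∞ :=
    ((measure_mono sdiff_subset).trans_lt (measure_ball_lt_top (μ := volume) (x := (0 : En n)))).ne
  have h4 := measure_inter_add_sdiff (μ := volume) U hA'.measurableSet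
  have e : U \ A' = ball 0 ρ \ A' := by
    ext z
    constructor
    · rintro ⟨h, h'⟩; exact ⟨h.1, h'⟩
    · rintro ⟨h, h'⟩; exact ⟨⟨h, fun h2 => h' (hAA h2)⟩, h'⟩
  rw [e] at h4
  have f1 : volume (U ∩ A') ≠ ∞ := ((measure_mono inter_subset_left).trans_lt hUfin.lt_top).ne
  have f2 : volume (ball 0 ρ \ A') ≠ ∞ := by
    rw [← e]; exact ((measure_mono sdiff_subset).trans_lt hUfin.lt_top).ne
  have h5 := congrArg ENNReal.toReal h4
  rw [ENNReal.toReal_add f1 f2] at h5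
  have h6 := ENNReal.toReal_mono f1 h3
  rw [ENNReal.toReal_mul, ENNReal.toReal_ofReal (by positivity)] at h6
  linarith

/-- Measure-to-pointwise estimate (weak Harnack inequality). -/
theorem weak_harnack (n : ℕ) (L : ℝ) (hL : 0 ≤ L) (η : ℝ) (hη : 0 < η) (c0 : ℝ) (hc0 : 0 < c0) :
    ∃ θ : ℝ, 0 < θ ∧ ∀ (ρ : ℝ), 0 < ρ → ∀ w : En n → ℝ,
      (∀ x ∈ ball (0 : En n) (5 * ρ), ContDiffAt ℝ 2 w x) →
      (∀ x ∈ ball (0 : En n) (5 * ρ), SS L w x) →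
      (∀ x ∈ ball (0 : En n) (5 * ρ), 0 ≤ w x) →
      η * (volume (ball (0 : En n) ρ)).toReal ≤
        (volume {x ∈ ball (0 : En n) ρ | c0 ≤ w x}).toReal →
      ∀ x ∈ ball (0 : En n) (ρ / 2), θ ≤ w x := by
  obtain ⟨m, hm⟩ := exists_nat_ge (1 + L)
  set M : ℝ := 64 * (49 ^ (m + 1) * 16 ^ m) with hM
  have hMpos : 0 < M := by rw [hM]; positivity
  set c : ℝ := (M / (8 * (1 + M) * (1 + L))) ^ n with hc
  have hcpos : 0 < c := by positivity
  have hc1 : c ≤ 1 := by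
    apply pow_le_one₀ (by positivity)
    rw [div_le_one (by positivity)]
    nlinarith [mul_pos hMpos hMpos, mul_nonneg hMpos.le hL]
  set μ : ℝ := 1 - c / 7 ^ n with hμ
  have hq : 0 < c / 7 ^ n := by positivity
  have hq1 : c / 7 ^ n ≤ 1 := by
    rw [div_le_one (by positivity)]
    exact hc1.trans (one_le_pow₀ (by norm_num))
  have hμ1 : μ < 1 := by linarith
  have hμ0 : 0 ≤ μ := by linarith
  obtain ⟨k, hk⟩ := exists_pow_lt_of_lt_one hη hμ1
  -- θ
  set N : ℝ := 2 + 8 * (1 + M) ^ k * 36 with hN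
  have hNpos : 0 < N := by positivity
  refine ⟨c0 / N, by positivity, ?_⟩
  intro ρ hρ w hw hs hpos hmeas x hx
  by_contra hcon
  push Not at hcon
  set τ : ℝ := c0 / N with hτ
  have hτpos : 0 < τ := by positivity
  set a : ℝ := 8 * τ / ρ ^ 2 with ha
  have hapos : 0 < a := by positivity
  have hwc : ContinuousOn w (ball (0 : En n) (5 * ρ)) := fun z hz =>
    (hw z hz).continuousAt.continuousWithinAt
  have hρR : ρ < 5 * ρ := by linarith
  have hxρ : ‖x‖ < ρ / 2 := by simpa using hx
  have hx5 : x ∈ ball (0 : En n) (5 * ρ) := by rw [mem_ball, dist_zero_right]; linarith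
  -- initial contact point
  have hne : (Aset w (5 * ρ) ρ a).Nonempty := by
    have hsub : closedBall x (ρ / 2) ⊆ closedBall 0 ρ := by
      apply closedBall_subset_closedBall'
      rw [dist_zero_right]; linarith
    set g : En n → ℝ := fun z => w z + a / 2 * ‖z - x‖ ^ 2 with hg
    have hgc : ContinuousOn g (closedBall x (ρ / 2)) :=
      (hwc.mono (hsub.trans (closedBall_subset_ball hρR))).add (by fun_prop)
    have hxx : x ∈ closedBall x (ρ / 2) := mem_closedBall_self (by positivity)
    obtain ⟨p, hp, hpm⟩ := (isCompact_closedBall x (ρ / 2)).exists_isMinOn ⟨x, hxx⟩ hgc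
    refine ⟨p, hsub hp, x, ball_subset_closedBall hx5, fun z hz => ?_⟩
    by_cases hzx : z ∈ closedBall x (ρ / 2)
    · exact hpm hzx
    · have h1 : g p ≤ g x := hpm hxx
      rw [mem_closedBall, dist_eq_norm, not_le] at hzx
      have h2 : g x = w x := by simp [hg]
      have h3 := hpos z hz
      have h4 : a / 2 * (ρ / 2) ^ 2 ≤ a / 2 * ‖z - x‖ ^ 2 := by gcongr
      have h5 : a / 2 * (ρ / 2) ^ 2 = τ := by rw [ha]; field_simp; norm_num
      simp only [hg] at h1 h2
      linarith
  have hcl : ∀ b, IsClosed (Aset w (5 * ρ) ρ b) := fun b => (Aset_compact hρR hwc).isClosed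
  have hiter : ∀ j : ℕ, (Aset w (5 * ρ) ρ ((1 + M) ^ j * a)).Nonempty ∧
      (volume (ball 0 ρ \ Aset w (5 * ρ) ρ ((1 + M) ^ j * a))).toReal ≤
        μ ^ j * (volume (ball (0 : En n) ρ)).toReal := by
    intro j
    induction j with
    | zero =>
      refine ⟨by simpa using hne, ?_⟩
      simp only [pow_zero, one_mul]
      exact ENNReal.toReal_mono measure_ball_lt_top.ne (measure_mono sdiff_subset)
    | succ j ih =>
      obtain ⟨ihn, ihm⟩ := ih
      have hb : 0 < (1 + M) ^ j * a := by positivity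
      have e : (1 + M) ^ (j + 1) * a = (1 + M) * ((1 + M) ^ j * a) := by ring
      rw [e]
      have hmono := Aset_mono (w := w) hρR hb hMpos
      refine ⟨ihn.mono hmono, ?_⟩
      have := ink_spots (c := c) hρ (hcl _) (hcl _) ihn (fun z hz => hz.1) hmono hcpos.le ?_
      · calc _ ≤ _ := this
          _ ≤ μ * (μ ^ j * (volume (ball (0 : En n) ρ)).toReal) := by gcongr
          _ = _ := by ring
      · rintro x0 r hr hr2 hsubr ⟨x1, hx1, hd⟩
        refine propagation hL hm hb hr hρR hM hw hs ?_ hd hsubr hx1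
        apply closedBall_subset_ball'
        have := hsubr (mem_closedBall_self hr.le)
        rw [mem_closedBall] at this
        linarith
  obtain ⟨-, hfin⟩ := hiter k
  have hsubset : {x ∈ ball (0 : En n) ρ | c0 ≤ w x} ⊆
      ball 0 ρ \ Aset w (5 * ρ) ρ ((1 + M) ^ k * a) := by
    rintro p ⟨hp, hpw⟩
    refine ⟨hp, ?_⟩
    rintro ⟨-, y, hy, hmin⟩
    have h1 := hmin x hx5
    set b := (1 + M) ^ k * a with hb
    have hbpos : 0 < b := by positivity
    have h2 : 0 ≤ b / 2 * ‖p - y‖ ^ 2 := by positivity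
    have h3 : ‖x - y‖ ≤ 6 * ρ := by
      rw [mem_closedBall, dist_zero_right] at hy
      have := norm_sub_le x y
      linarith
    have h4 : b / 2 * ‖x - y‖ ^ 2 ≤ b / 2 * (6 * ρ) ^ 2 := by gcongr
    have h5 : b / 2 * (6 * ρ) ^ 2 = (8 * (1 + M) ^ k * 18) * τ := by
      rw [hb, ha]; field_simp; norm_num
    have h6 : N * τ = c0 := by rw [hτ]; field_simp
    have h7 : (0:ℝ) < (1 + M) ^ k * τ := by positivity
    have h8 : N * τ = 2 * τ + 288 * ((1 + M) ^ k * τ) := by rw [hN]; ring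
    nlinarith
  have hle := ENNReal.toReal_mono
    ((measure_mono sdiff_subset).trans_lt (measure_ball_lt_top (μ := volume) (x := (0 : En n))
      (r := ρ))).ne (measure_mono (μ := volume) hsubset)
  have hvpos : 0 < (volume (ball (0 : En n) ρ)).toReal :=
    ENNReal.toReal_pos (measure_ball_pos _ _ hρ).ne' measure_ball_lt_top.ne
  have := mul_lt_mul_of_pos_right hk hvpos
  linarith

/-- Quadratic form of a matrix. -/
def qf {n : ℕ} (M : Mat n) (z : En n) : ℝ := inner ℝ (Matrix.toEuclideanCLM (𝕜 := ℝ) M z) z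

theorem qf_add {n : ℕ} (M N : Mat n) (z : En n) : qf (M + N) z = qf M z + qf N z := by
  simp [qf, inner_add_left]

theorem qf_sub {n : ℕ} (M N : Mat n) (z : En n) : qf (M - N) z = qf M z - qf N z := by
  simp [qf, inner_sub_left]

theorem qf_smul {n : ℕ} (c : ℝ) (M : Mat n) (z : En n) : qf (c • M) z = c * qf M z := by
  simp [qf, inner_smul_left]

theorem qf_one {n : ℕ} (z : En n) : qf (1 : Mat n) z = ‖z‖ ^ 2 := by
  simp [qf]

theorem abs_qf_le {n : ℕ} (M : Mat n) (z : En n) : |qf M z| ≤ opNorm M * ‖z‖ ^ 2 := by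
  refine (abs_real_inner_le_norm _ _).trans ?_
  have := (Matrix.toEuclideanCLM (𝕜 := ℝ) M).le_opNorm z
  rw [opNorm, pow_two, ← mul_assoc]
  gcongr

theorem qf_eq_sum {n : ℕ} (M : Mat n) (z : En n) : qf M z = ∑ i, ∑ j, M i j * z j * z i := by
  rw [qf, real_inner_comm]
  rw [Matrix.inner_toEuclideanCLM]
  simp [dotProduct, Matrix.mulVec, Finset.mul_sum, mul_comm]

theorem psd_of_qf {n : ℕ} (M : Mat n) (hM : M.IsSymm) (h : ∀ z, 0 ≤ qf M z) : M.PosSemidef := by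
  refine Matrix.PosSemidef.of_dotProduct_mulVec_nonneg ?_ ?_
  · simpa [Matrix.IsHermitian, Matrix.IsSymm] using hM
  · intro x
    have := h (WithLp.toLp 2 x)
    rw [qf_eq_sum] at this
    simpa [dotProduct, Matrix.mulVec, Finset.mul_sum, mul_comm] using this

theorem opNorm_smul_one {n : ℕ} {t : ℝ} (ht : 0 ≤ t) : opNorm (t • (1 : Mat n)) ≤ t := by
  refine ContinuousLinearMap.opNorm_le_bound _ ht fun z => ?_
  simp [norm_smul, abs_of_nonneg ht]

theorem opNorm_tri {n : ℕ} (M N : Mat n) : opNorm (M - N) ≤ opNorm M + opNorm N := by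
  simp only [opNorm, map_sub]
  exact norm_sub_le _ _

theorem opNorm_sub_comm {n : ℕ} (M N : Mat n) : opNorm (M - N) = opNorm (N - M) := by
  simp only [opNorm, map_sub]
  exact norm_sub_rev _ _

theorem hess_qf {n : ℕ} {u : En n → ℝ} {x : En n} (hu : ContDiffAt ℝ 2 u x) (z : En n) :
    qf (hessian u x) z = H2 u x z := by
  have hpd : ∀ i j, hessian u x i j =
      fderiv ℝ (fderiv ℝ u) x (EuclideanSpace.single j 1) (EuclideanSpace.single i 1) := by
    intro i j
    have h := ((cda_fderiv hu).hasFDerivAt.clm_apply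
      (hasFDerivAt_const (EuclideanSpace.single i (1:ℝ)) x)).fderiv
    simp only [hessian, Matrix.of_apply, pd2]
    rw [h]
    simp
  have hz : z = ∑ i, z i • EuclideanSpace.single i (1:ℝ) := by
    ext k
    simp [Finset.sum_apply, Pi.single_apply]
  rw [qf_eq_sum, H2]
  conv_rhs => rw [hz]
  simp only [map_sum, map_smul, sum_apply, smul_apply, smul_eq_mul, hpd]
  refine Finset.sum_congr rfl fun i _ => ?_
  rw [Finset.mul_sum]
  refine Finset.sum_congr rfl fun j _ => ?_
  ring

theorem hess_symm {n : ℕ} {u : En n → ℝ} {x : En n} (hu : ContDiffAt ℝ 2 u x) :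
    (hessian u x).IsSymm := by
  have hpd : ∀ i j, hessian u x i j =
      fderiv ℝ (fderiv ℝ u) x (EuclideanSpace.single j 1) (EuclideanSpace.single i 1) := by
    intro i j
    have h := ((cda_fderiv hu).hasFDerivAt.clm_apply
      (hasFDerivAt_const (EuclideanSpace.single i (1:ℝ)) x)).fderiv
    simp only [hessian, Matrix.of_apply, pd2]
    rw [h]
    simp
  ext i j
  rw [Matrix.transpose_apply, hpd, hpd]
  exact (hu.isSymmSndFDerivAt (by simp)) _ _

theorem ellip {n : ℕ} {lam Lam : ℝ} {F : Mat n → ℝ} (hLam : 0 ≤ Lam)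
    (hF : UnifEllipticOperator lam Lam F) {M Q : Mat n} (hM : M.IsSymm) (hQ : Q.IsSymm)
    (h : F M ≤ F (M + Q)) {t : ℝ} (ht : 0 ≤ t) (hq : ∀ z, qf Q z ≤ t * ‖z‖ ^ 2) :
    lam * opNorm (t • (1 : Mat n) - Q) ≤ Lam * t := by
  have s1 : (t • (1 : Mat n)).IsSymm := by
    simp [Matrix.IsSymm]
  have s2 : (t • (1 : Mat n) - Q).IsSymm := s1.sub hQ
  have p1 : (t • (1 : Mat n)).PosSemidef := psd_of_qf _ s1 fun z => by
    rw [qf_smul, qf_one]; positivity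
  have p2 : (t • (1 : Mat n) - Q).PosSemidef := psd_of_qf _ s2 fun z => by
    rw [qf_sub, qf_smul, qf_one]; linarith [hq z]
  have h1 := (hF (M + Q) _ (hM.add hQ) s2 p2).1
  have h2 := (hF M _ hM s1 p1).2
  have e : M + Q + (t • (1 : Mat n) - Q) = M + t • (1 : Mat n) := by abel
  rw [e] at h1
  have h3 : Lam * opNorm (t • (1 : Mat n)) ≤ Lam * t := by
    have := opNorm_smul_one (n := n) ht
    gcongr
  linarith

theorem trans_deriv {n : ℕ} {G : Type*} [NormedAddCommGroup G] [NormedSpace ℝ G] {g : En n → G}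
    {g' : En n →L[ℝ] G} {x p : En n} (h : HasFDerivAt g g' (x + p)) :
    HasFDerivAt (fun y => g (y + p)) g' x := by
  have key : HasFDerivAt (fun y => g (y + p)) (g'.comp (ContinuousLinearMap.id ℝ (En n))) x :=
    HasFDerivAt.comp (f := fun y : En n => y + p) x h ((hasFDerivAt_id x).add_const p)
  rwa [ContinuousLinearMap.comp_id] at key

/-- Shifted second difference. -/
def sdiffw {n : ℕ} (u : En n → ℝ) (S c : ℝ) (p : En n) (y : En n) : ℝ :=
  S - c * (u (y + p) + u (y + -p) - 2 * u y)

theorem sdiffw_cda {n : ℕ} {u : En n → ℝ} {S c : ℝ} {p x : En n} (h0 : ContDiffAt ℝ 2 u x)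
    (h1 : ContDiffAt ℝ 2 u (x + p)) (h2 : ContDiffAt ℝ 2 u (x + -p)) :
    ContDiffAt ℝ 2 (sdiffw u S c p) x := by
  have t : ∀ q : En n, ContDiffAt ℝ 2 u (x + q) → ContDiffAt ℝ 2 (fun y => u (y + q)) x :=
    fun q hq => ContDiffAt.comp x (f := fun y => y + q) hq (by fun_prop)
  exact contDiffAt_const.sub (contDiffAt_const.mul (((t p h1).add (t (-p) h2)).sub
    (contDiffAt_const.mul h0)))

theorem sdiffw_H2 {n : ℕ} {u : En n → ℝ} {S c : ℝ} {p x : En n} (h0 : ContDiffAt ℝ 2 u x)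
    (h1 : ContDiffAt ℝ 2 u (x + p)) (h2 : ContDiffAt ℝ 2 u (x + -p)) (z : En n) :
    H2 (sdiffw u S c p) x z = -(c * (H2 u (x + p) z + H2 u (x + -p) z - 2 * H2 u x z)) := by
  have hev : fderiv ℝ (sdiffw u S c p) =ᶠ[𝓝 x] fun y =>
      -(c • (fderiv ℝ u (y + p) + fderiv ℝ u (y + -p) - (2:ℝ) • fderiv ℝ u y)) := by
    have t : ∀ q : En n, ContDiffAt ℝ 2 u (x + q) →
        ∀ᶠ y in 𝓝 x, DifferentiableAt ℝ u (y + q) := by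
      intro q hq
      have : Tendsto (fun y : En n => y + q) (𝓝 x) (𝓝 (x + q)) :=
        (continuous_id.add continuous_const).tendsto x
      exact this.eventually (cda_near hq)
    filter_upwards [cda_near h0, t p h1, t (-p) h2] with y d0 d1 d2
    have := (((trans_deriv d1.hasFDerivAt).add (trans_deriv d2.hasFDerivAt)).sub
      (d0.hasFDerivAt.const_mul (2:ℝ))).const_mul c
    exact (this.const_sub S).fderiv
  have hd := (((trans_deriv (cda_fderiv h1).hasFDerivAt).add
      (trans_deriv (cda_fderiv h2).hasFDerivAt)).sub
      ((cda_fderiv h0).hasFDerivAt.const_smul (2:ℝ))).const_smul c |>.neg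
  have e := hev.fderiv_eq.trans hd.fderiv
  rw [H2, e]
  simp [H2]

theorem sdiffw_SS {n : ℕ} {lam Lam : ℝ} (hlam : 0 < lam) (hLam : lam ≤ Lam) {F : Mat n → ℝ}
    (hconc : ConcaveOnSym F) (hF : UnifEllipticOperator lam Lam F)
    {u : En n → ℝ} {S c : ℝ} {p x : En n} (hc : 0 < c) (h0 : ContDiffAt ℝ 2 u x)
    (h1 : ContDiffAt ℝ 2 u (x + p)) (h2 : ContDiffAt ℝ 2 u (x + -p))
    (f0 : F (hessian u x) = 0) (f1 : F (hessian u (x + p)) = 0)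
    (f2 : F (hessian u (x + -p)) = 0) : SS (Lam / lam) (sdiffw u S c p) x := by
  intro t ht hlow z
  set C := hessian u x with hC
  set A := hessian u (x + p) with hA
  set B := hessian u (x + -p) with hB
  set Q : Mat n := ((1/2 : ℝ) • A + (1 - 1/2 : ℝ) • B) - C with hQ
  have sC : C.IsSymm := hess_symm h0
  have sA : A.IsSymm := hess_symm h1
  have sB : B.IsSymm := hess_symm h2
  have sQ : Q.IsSymm := ((sA.smul _).add (sB.smul _)).sub sC
  have hq : ∀ y, qf Q y = 1/2 * H2 u (x + p) y + 1/2 * H2 u (x + -p) y - H2 u x y := by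
    intro y
    rw [hQ, qf_sub, qf_add, qf_smul, qf_smul, hess_qf h0, hess_qf h1, hess_qf h2]
    ring
  have hw : ∀ y, H2 (sdiffw u S c p) x y = -(2 * c * qf Q y) := by
    intro y
    rw [sdiffw_H2 h0 h1 h2, hq]; ring
  have hle : F C ≤ F (C + Q) := by
    have := hconc A B sA sB (1/2) (by norm_num)
    rw [f1, f2] at this
    rw [f0, hQ, add_sub_cancel]
    linarith
  have hell := ellip (hlam.le.trans hLam) hF sC sQ hle (t := t / (2 * c)) (by positivity) (by
    intro y
    have := hlow y
    rw [hw] at this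
    rw [div_mul_eq_mul_div, le_div_iff₀ (by positivity)]
    linarith)
  have hb := abs_qf_le ((t / (2 * c)) • (1 : Mat n) - Q) z
  rw [qf_sub, qf_smul, qf_one] at hb
  have hb2 := (le_abs_self _).trans hb
  have hN : opNorm ((t / (2 * c)) • (1 : Mat n) - Q) ≤ Lam / lam * (t / (2 * c)) := by
    rw [div_mul_eq_mul_div, le_div_iff₀ hlam]; linarith
  have hz : 0 ≤ ‖z‖ ^ 2 := by positivity
  have hb3 := hb2.trans (mul_le_mul_of_nonneg_right hN hz)
  rw [hw]
  have ht' : 0 ≤ t / (2 * c) * ‖z‖ ^ 2 := by positivity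
  have hb4 : - qf Q z ≤ Lam / lam * (t / (2 * c)) * ‖z‖ ^ 2 := by linarith
  calc -(2 * c * qf Q z) = 2 * c * (- qf Q z) := by ring
    _ ≤ 2 * c * (Lam / lam * (t / (2 * c)) * ‖z‖ ^ 2) := by gcongr
    _ = _ := by field_simp

theorem H2_neg {n : ℕ} (u : En n → ℝ) (x e : En n) : H2 u x (-e) = H2 u x e := by
  simp [H2]

theorem second_difference {n : ℕ} {u : En n → ℝ} {x e : En n} {h : ℝ} (hh : 0 < h)
    (hu : ∀ s ∈ Icc 0 h, ContDiffAt ℝ 2 u (x + s • e) ∧ ContDiffAt ℝ 2 u (x + s • (-e))) :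
    ∃ ξ ∈ Ioo 0 h, u (x + h • e) + u (x + -(h • e)) - 2 * u x =
      h ^ 2 * ((H2 u (x + ξ • e) e + H2 u (x + ξ • (-e)) e) / 2) := by
  set g : ℝ → ℝ := fun s => u (x + s • e) + u (x + s • (-e)) with hg
  set g1 : ℝ → ℝ := fun s => fderiv ℝ u (x + s • e) e + fderiv ℝ u (x + s • (-e)) (-e) with hg1
  have d1 : ∀ s ∈ Icc 0 h, HasDerivAt g (g1 s) s := fun s hs =>
    (line_deriv1 ((hu s hs).1.differentiableAt (by norm_num))).add
      (line_deriv1 ((hu s hs).2.differentiableAt (by norm_num)))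
  have d2 : ∀ s ∈ Icc 0 h, HasDerivAt g1 (H2 u (x + s • e) e + H2 u (x + s • (-e)) e) s := by
    intro s hs
    have := (line_deriv2 (hu s hs).1).add (line_deriv2 (hu s hs).2)
    rwa [H2_neg] at this
  obtain ⟨c, hc, hcc⟩ := exists_ratio_hasDerivAt_eq_ratio_slope (fun s : ℝ => s ^ 2)
    (fun s => 2 * s) hh (by fun_prop) (fun s _ => by simpa using hasDerivAt_pow 2 s) g g1
    (fun s hs => (d1 s hs).continuousAt.continuousWithinAt) (fun s hs => d1 s (Ioo_subset_Icc_self hs))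
  have hsub : Icc 0 c ⊆ Icc 0 h := Icc_subset_Icc le_rfl hc.2.le
  obtain ⟨ξ, hξ, hξc⟩ := exists_hasDerivAt_eq_slope g1
    (fun s => H2 u (x + s • e) e + H2 u (x + s • (-e)) e) hc.1
    (fun s hs => (d2 s (hsub hs)).continuousAt.continuousWithinAt)
    (fun s hs => d2 s (hsub (Ioo_subset_Icc_self hs)))
  refine ⟨ξ, ⟨hξ.1, hξ.2.trans hc.2⟩, ?_⟩
  have g10 : g1 0 = 0 := by simp [hg1]
  have g0 : g 0 = 2 * u x := by simp [hg]; ring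
  have gh : g h = u (x + h • e) + u (x + -(h • e)) := by simp [hg]
  have hcpos := hc.1
  rw [g10] at hξc
  rw [hξc, ← gh, ← g0]
  simp only [sub_zero] at *
  have : (g h - g 0) * (2 * c) = h ^ 2 * g1 c := by simpa using hcc
  field_simp
  linarith

theorem qf_lip {n : ℕ} (A : Mat n) (z e : En n) (hz : ‖z‖ = 1) (he : ‖e‖ = 1) :
    qf A z ≤ qf A e + 2 * opNorm A * ‖z - e‖ := by
  have h1 : qf A z - qf A e = inner ℝ (Matrix.toEuclideanCLM (𝕜 := ℝ) A (z - e)) z +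
      inner ℝ (Matrix.toEuclideanCLM (𝕜 := ℝ) A e) (z - e) := by
    simp only [qf, map_sub, inner_sub_left, inner_sub_right]; ring
  have h2 := real_inner_le_norm (Matrix.toEuclideanCLM (𝕜 := ℝ) A (z - e)) z
  have h3 := real_inner_le_norm (Matrix.toEuclideanCLM (𝕜 := ℝ) A e) (z - e)
  have h4 := (Matrix.toEuclideanCLM (𝕜 := ℝ) A).le_opNorm (z - e)
  have h5 := (Matrix.toEuclideanCLM (𝕜 := ℝ) A).le_opNorm e
  rw [he] at h5
  rw [hz] at h2
  have h6 := mul_le_mul_of_nonneg_right h5 (norm_nonneg (z - e))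
  simp only [opNorm]
  linarith

theorem dir_lemma {n : ℕ} {lam Lam : ℝ} (hlam : 0 < lam) (hLam : lam ≤ Lam) {F : Mat n → ℝ}
    (hF : UnifEllipticOperator lam Lam F) {u : En n → ℝ} {x y : En n}
    (cx : ContDiffAt ℝ 2 u x) (cy : ContDiffAt ℝ 2 u y)
    (fx : F (hessian u x) = 0) (fy : F (hessian u y) = 0) {t0 : ℝ} (ht0 : 0 < t0)
    (ht1 : t0 * (1 + Lam / lam) ≤ 1 / 16) (E : Finset (En n)) (hE1 : ∀ e ∈ E, ‖e‖ = 1)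
    (hnet : ∀ z : En n, ‖z‖ = 1 → ∃ e ∈ E, ‖z - e‖ ≤ t0 / 4)
    (hA1 : 1 / 8 ≤ opNorm (hessian u y - hessian u x))
    (hA2 : opNorm (hessian u y - hessian u x) ≤ 1) :
    ∃ e ∈ E, t0 / 2 ≤ H2 u y e - H2 u x e := by
  by_contra! hcon
  set A := hessian u y - hessian u x with hA
  have hqA : ∀ z, qf A z = H2 u y z - H2 u x z := fun z => by
    rw [hA, qf_sub, hess_qf cx, hess_qf cy]
  have hunit : ∀ z : En n, ‖z‖ = 1 → qf A z ≤ t0 := by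
    intro z hz
    obtain ⟨e, he, hze⟩ := hnet z hz
    have h1 := qf_lip A z e hz (hE1 e he)
    have h2 := hcon e he
    rw [← hqA] at h2
    have h3 : opNorm A * ‖z - e‖ ≤ 1 * (t0 / 4) :=
      mul_le_mul hA2 hze (norm_nonneg _) zero_le_one
    linarith
  have hall : ∀ z : En n, qf A z ≤ t0 * ‖z‖ ^ 2 := by
    intro z
    by_cases hz : z = 0
    · subst hz; simp [qf]
    · have hz' : 0 < ‖z‖ := norm_pos_iff.2 hz
      have h1 := hunit (‖z‖⁻¹ • z) (by rw [norm_smul, norm_inv, norm_norm]; field_simp)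
      have h2 : qf A (‖z‖⁻¹ • z) = (‖z‖ ^ 2)⁻¹ * qf A z := by
        simp only [qf, map_smul, inner_smul_left, inner_smul_right]
        simp; field_simp
      rw [h2, inv_mul_le_iff₀ (by positivity)] at h1
      linarith
  have sA : A.IsSymm := (hess_symm cy).sub (hess_symm cx)
  have hell := ellip (hlam.le.trans hLam) hF (hess_symm cx) sA
    (by rw [hA, add_sub_cancel, fx, fy]) ht0.le hall
  have hN : opNorm (t0 • (1 : Mat n) - A) ≤ Lam / lam * t0 := by
    rw [div_mul_eq_mul_div, le_div_iff₀ hlam]; linarith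
  have h1 := opNorm_tri (t0 • (1 : Mat n)) (t0 • (1 : Mat n) - A)
  rw [sub_sub_cancel] at h1
  have h2 := opNorm_smul_one (n := n) ht0.le
  nlinarith

theorem H2_cont {n : ℕ} {u : En n → ℝ} {x : En n} (h : ContDiffAt ℝ 2 u x) (e : En n) :
    ContinuousAt (fun y => H2 u y e) x := by
  have h1 : ContDiffAt ℝ 1 (fderiv ℝ u) x := h.fderiv_right (by norm_num)
  have h2 : ContDiffAt ℝ 0 (fderiv ℝ (fderiv ℝ u)) x := h1.fderiv_right (by norm_num)
  have h3 := h2.continuousAt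
  exact (h3.clm_apply continuousAt_const).clm_apply continuousAt_const

/-- The property provided by the weak Harnack inequality. -/
def WH (n : ℕ) (L η c θ : ℝ) : Prop :=
  ∀ ρ, 0 < ρ → ∀ w : En n → ℝ, (∀ x ∈ ball (0 : En n) (5 * ρ), ContDiffAt ℝ 2 w x) →
    (∀ x ∈ ball (0 : En n) (5 * ρ), SS L w x) → (∀ x ∈ ball (0 : En n) (5 * ρ), 0 ≤ w x) →
    η * (volume (ball (0 : En n) ρ)).toReal ≤
      (volume {x ∈ ball (0 : En n) ρ | c ≤ w x}).toReal →
    ∀ x ∈ ball (0 : En n) (ρ / 2), θ ≤ w x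

theorem one_dir {n : ℕ} {lam Lam : ℝ} (hlam : 0 < lam) (hLam : lam ≤ Lam) {F : Mat n → ℝ}
    (hconc : ConcaveOnSym F) (hF : UnifEllipticOperator lam Lam F) {u : En n → ℝ} {r : ℝ}
    (hr : 0 < r) (hu : ∀ x ∈ ball (0 : En n) r, ContDiffAt ℝ 2 u x)
    (hFu : ∀ x ∈ ball (0 : En n) r, F (hessian u x) = 0)
    {η c0 θ : ℝ} (hc0 : 0 < c0) (hθ : 0 < θ) (hWH : WH n (Lam / lam) η (c0 / 2) θ)
    {e : En n} (he : ‖e‖ = 1) {S : ℝ} (hS : ∀ x ∈ ball (0 : En n) r, H2 u x e ≤ S)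
    (hvol : η * (volume (ball (0 : En n) (r / 10))).toReal ≤
      (volume {x ∈ ball (0 : En n) (r / 10) | c0 ≤ S - H2 u x e}).toReal) :
    ∀ x ∈ ball (0 : En n) (r / 20), H2 u x e ≤ S - θ / 2 := by
  have huc : UniformContinuousOn (fun x => H2 u x e) (closedBall (0 : En n) (r / 2)) := by
    refine (isCompact_closedBall _ _).uniformContinuousOn_of_continuous fun x hx => ?_
    refine (H2_cont (hu x ?_) e).continuousWithinAt
    rw [mem_closedBall] at hx; rw [mem_ball]; linarith
  set ε := min (c0 / 2) (θ / 2) with hε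
  have hεp : 0 < ε := by rw [hε]; positivity
  have hε1 : ε ≤ c0 / 2 := min_le_left _ _
  have hε2 : ε ≤ θ / 2 := min_le_right _ _
  obtain ⟨δ, hδ, hδ'⟩ := Metric.uniformContinuousOn_iff.1 huc ε hεp
  set h := min (r / 20) (δ / 2) with hh
  have hhp : 0 < h := by rw [hh]; positivity
  have hh1 : h ≤ r / 20 := min_le_left _ _
  have hh2 : h ≤ δ / 2 := min_le_right _ _
  -- norms of shifts
  have hsh : ∀ (x : En n) (s : ℝ), 0 ≤ s → s ≤ h → ‖x + s • e‖ ≤ ‖x‖ + h ∧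
      ‖x + s • (-e)‖ ≤ ‖x‖ + h := by
    intro x s hs0 hs
    have a1 := norm_add_le x (s • e)
    have a2 := norm_add_le x (s • (-e))
    rw [norm_smul, he, Real.norm_of_nonneg hs0] at a1
    rw [norm_smul, norm_neg, he, Real.norm_of_nonneg hs0] at a2
    constructor <;> linarith
  set w := sdiffw u S (h ^ 2)⁻¹ (h • e) with hw
  have hin : ∀ (x : En n), ‖x‖ < r / 2 → ∀ s : ℝ, 0 ≤ s → s ≤ h →
      x + s • e ∈ ball (0 : En n) r ∧ x + s • (-e) ∈ ball (0 : En n) r := by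
    intro x hx s hs0 hs
    have := hsh x s hs0 hs
    simp only [mem_ball_zero_iff]
    constructor <;> linarith
  have hrep : ∀ x : En n, ‖x‖ < r / 2 → ∃ ξ ∈ Ioo 0 h,
      w x = S - (H2 u (x + ξ • e) e + H2 u (x + ξ • (-e)) e) / 2 := by
    intro x hx
    obtain ⟨ξ, hξ, h2⟩ := second_difference (u := u) (x := x) (e := e) hhp (fun s hs =>
      ⟨hu _ (hin x hx s hs.1 hs.2).1, hu _ (hin x hx s hs.1 hs.2).2⟩)
    refine ⟨ξ, hξ, ?_⟩
    rw [hw, sdiffw, h2]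
    field_simp
  have hclose : ∀ x : En n, ‖x‖ < r / 10 → |w x - (S - H2 u x e)| ≤ ε := by
    intro x hx
    obtain ⟨ξ, hξ, h2⟩ := hrep x (by linarith)
    have b := hsh x ξ hξ.1.le hξ.2.le
    have m0 : x ∈ closedBall (0 : En n) (r / 2) := by
      rw [mem_closedBall_zero_iff]; linarith
    have d1 := hδ' (x + ξ • e) (by rw [mem_closedBall_zero_iff]; linarith [b.1]) x m0 (by
      rw [dist_eq_norm, add_sub_cancel_left, norm_smul, he, Real.norm_of_nonneg hξ.1.le]
      linarith [hξ.2])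
    have d2 := hδ' (x + ξ • (-e)) (by rw [mem_closedBall_zero_iff]; linarith [b.2]) x m0 (by
      rw [dist_eq_norm, add_sub_cancel_left, norm_smul, norm_neg, he, Real.norm_of_nonneg hξ.1.le]
      linarith [hξ.2])
    rw [Real.dist_eq, abs_lt] at d1 d2
    rw [h2, abs_le]
    constructor <;> linarith [d1.1, d1.2, d2.1, d2.2]
  have e5 : 5 * (r / 10) = r / 2 := by ring
  have key := hWH (r / 10) (by positivity) w
  rw [e5] at key
  have hneg : h • (-e) = -(h • e) := smul_neg _ _
  have hm : ∀ x ∈ ball (0 : En n) (r / 2), x ∈ ball (0 : En n) r ∧ x + h • e ∈ ball (0 : En n) r ∧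
      x + -(h • e) ∈ ball (0 : En n) r := by
    intro x hx
    rw [mem_ball_zero_iff] at hx
    have := hin x hx h hhp.le le_rfl
    rw [hneg] at this
    exact ⟨by rw [mem_ball_zero_iff]; linarith, this⟩
  have key2 := key
    (fun x hx => sdiffw_cda (hu _ (hm x hx).1) (hu _ (hm x hx).2.1) (hu _ (hm x hx).2.2))
    (fun x hx => sdiffw_SS hlam hLam hconc hF (by positivity) (hu _ (hm x hx).1)
      (hu _ (hm x hx).2.1) (hu _ (hm x hx).2.2) (hFu _ (hm x hx).1)
      (hFu _ (hm x hx).2.1) (hFu _ (hm x hx).2.2))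
    (fun x hx => by
      rw [mem_ball_zero_iff] at hx
      obtain ⟨ξ, hξ, h2⟩ := hrep x hx
      have b := hin x hx ξ hξ.1.le hξ.2.le
      rw [h2]
      linarith [hS _ b.1, hS _ b.2])
    (by
      refine hvol.trans (ENNReal.toReal_mono ?_ (measure_mono ?_))
      · exact ((measure_mono (sep_subset _ _)).trans_lt measure_ball_lt_top).ne
      · rintro x ⟨hx, hx2⟩
        refine ⟨hx, ?_⟩
        rw [mem_ball_zero_iff] at hx
        have := (abs_le.1 (hclose x hx)).1
        linarith)
  intro x hx
  have h1 := key2 x (by rwa [div_div, show (10 : ℝ) * 2 = 20 by norm_num])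
  rw [mem_ball_zero_iff] at hx
  have := (abs_le.1 (hclose x (by linarith))).2
  linarith

theorem step_lemma {n : ℕ} {lam Lam : ℝ} (hlam : 0 < lam) (hLam : lam ≤ Lam) {F : Mat n → ℝ}
    (hconc : ConcaveOnSym F) (hF : UnifEllipticOperator lam Lam F) {u : En n → ℝ} {r : ℝ}
    (hr : 0 < r) (hu : ∀ x ∈ ball (0 : En n) r, ContDiffAt ℝ 2 u x)
    (hFu : ∀ x ∈ ball (0 : En n) r, F (hessian u x) = 0)
    (hd : ∀ x ∈ ball (0 : En n) r, ∀ y ∈ ball (0 : En n) r,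
      opNorm (hessian u x - hessian u y) ≤ 1) {t0 θ : ℝ} (ht0 : 0 < t0)
    (ht1 : t0 * (1 + Lam / lam) ≤ 1 / 16) (E : Finset (En n)) (hEne : E.Nonempty)
    (hE1 : ∀ e ∈ E, ‖e‖ = 1)
    (hnet : ∀ z : En n, ‖z‖ = 1 → ∃ e ∈ E, ‖z - e‖ ≤ t0 / 4)
    (hθ : 0 < θ) (hWH : WH n (Lam / lam) (1 / (E.card : ℝ)) (t0 / 2 / 2) θ)
    (S : En n → ℝ) (hS : ∀ e ∈ E, ∀ x ∈ ball (0 : En n) r, H2 u x e ≤ S e)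
    {x1 x2 : En n} (hx1 : x1 ∈ ball (0 : En n) r) (hx2 : x2 ∈ ball (0 : En n) r)
    (hbig : 1 / 4 < opNorm (hessian u x1 - hessian u x2)) :
    ∃ e ∈ E, ∀ x ∈ ball (0 : En n) (r / 20), H2 u x e ≤ S e - θ / 2 := by
  set V : En n → Set (En n) := fun e => {x ∈ ball (0 : En n) (r / 10) | t0 / 2 ≤ S e - H2 u x e}
    with hV
  have hcov : ball (0 : En n) (r / 10) ⊆ ⋃ e ∈ E, V e := by
    intro x hx
    have hxr : x ∈ ball (0 : En n) r := ball_subset_ball (by linarith) hx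
    have hj : ∃ y ∈ ball (0 : En n) r, 1 / 8 ≤ opNorm (hessian u y - hessian u x) := by
      by_contra! hc
      have a1 := hc x1 hx1
      have a2 := hc x2 hx2
      have a3 := opNorm_tri (hessian u x1 - hessian u x) (hessian u x2 - hessian u x)
      rw [sub_sub_sub_cancel_right] at a3
      linarith
    obtain ⟨y, hy, hyx⟩ := hj
    obtain ⟨e, he, hle⟩ := dir_lemma hlam hLam hF (hu x hxr) (hu y hy) (hFu x hxr) (hFu y hy)
      ht0 ht1 E hE1 hnet hyx (hd y hy x hxr)
    simp only [mem_iUnion]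
    exact ⟨e, he, hx, by linarith [hS e he y hy]⟩
  have hpig : ∃ e ∈ E, 1 / (E.card : ℝ) * (volume (ball (0 : En n) (r / 10))).toReal ≤
      (volume (V e)).toReal := by
    by_contra! hc
    have hfin : ∀ e, volume (V e) ≠ ⊤ := fun e =>
      ((measure_mono (sep_subset _ _)).trans_lt measure_ball_lt_top).ne
    have h1 : volume (ball (0 : En n) (r / 10)) ≤ ∑ e ∈ E, volume (V e) :=
      (measure_mono hcov).trans (measure_biUnion_finset_le _ _)
    have h2 := ENNReal.toReal_mono (ENNReal.sum_ne_top.2 fun e _ => hfin e) h1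
    rw [ENNReal.toReal_sum fun e _ => hfin e] at h2
    have h3 := Finset.sum_lt_sum_of_nonempty hEne hc
    rw [Finset.sum_const, nsmul_eq_mul] at h3
    have hcard : (E.card : ℝ) ≠ 0 := by exact_mod_cast hEne.card_pos.ne'
    rw [← mul_assoc, mul_one_div_cancel hcard, one_mul] at h3
    linarith
  obtain ⟨e, he, hvol⟩ := hpig
  exact ⟨e, he, one_dir hlam hLam hconc hF hr hu hFu (by positivity) hθ hWH (hE1 e he)
    (hS e he) hvol⟩

theorem exists_net (n : ℕ) (hn : 2 ≤ n) {δ : ℝ} (hδ : 0 < δ) :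
    ∃ E : Finset (En n), E.Nonempty ∧ (∀ e ∈ E, ‖e‖ = 1) ∧
      ∀ z : En n, ‖z‖ = 1 → ∃ e ∈ E, ‖z - e‖ ≤ δ := by
  obtain ⟨t, ht, htf, hcov⟩ := (isCompact_sphere (0 : En n) 1).finite_cover_balls hδ
  have hnet : ∀ z : En n, ‖z‖ = 1 → ∃ e ∈ htf.toFinset, ‖z - e‖ ≤ δ := by
    intro z hz
    have := hcov (mem_sphere_zero_iff_norm.2 hz)
    simp only [mem_iUnion] at this
    obtain ⟨e, he, hze⟩ := this
    rw [mem_ball, dist_eq_norm] at hze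
    exact ⟨e, htf.mem_toFinset.2 he, hze.le⟩
  refine ⟨htf.toFinset, ?_, ?_, hnet⟩
  · obtain ⟨e, he, -⟩ := hnet (EuclideanSpace.single ⟨0, by omega⟩ 1) (by simp)
    exact ⟨e, he⟩
  · intro e he
    exact mem_sphere_zero_iff_norm.1 (ht (htf.mem_toFinset.1 he))

/-- **Hessian oscillation decay (Evans–Krylov).** Let `F` be concave and uniformly elliptic
with `F(0) = 0`. There is `ρ₀ ∈ (0,1)` depending only on `n, λ, Λ` such that any `C²(B₁)`
solution of `F(D²u) = 0` whose Hessian map `𝓗 = D²u` satisfies `diam 𝓗(B₁) = 1` also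
satisfies `diam 𝓗(B_{ρ₀}) < 1/2`. -/
theorem hessian_oscillation_decay
    (n : ℕ) (hn : 2 ≤ n) (lam Lam : ℝ) (hlam : 0 < lam) (hLam : lam ≤ Lam) :
    ∃ ρ₀ : ℝ, ρ₀ ∈ Set.Ioo (0 : ℝ) 1 ∧
      ∀ (F : Mat n → ℝ), ConcaveOnSym F → F 0 = 0 → UnifEllipticOperator lam Lam F →
      ∀ u : En n → ℝ,
        ContDiffOn ℝ 2 u (ball (0 : En n) 1) →
        (∀ x ∈ ball (0 : En n) 1, F (hessian u x) = 0) →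
        hessDiam u (ball (0 : En n) 1) = 1 →
        hessDiam u (ball (0 : En n) ρ₀) < 1 / 2 := by
  have hL : 0 ≤ Lam / lam := div_nonneg (hlam.le.trans hLam) hlam.le
  set t0 : ℝ := 1 / (16 * (1 + Lam / lam)) with ht0
  have ht0p : 0 < t0 := by rw [ht0]; positivity
  have ht1 : t0 * (1 + Lam / lam) ≤ 1 / 16 := by
    rw [ht0]
    have : 0 < 1 + Lam / lam := by positivity
    apply le_of_eq
    generalize 1 + Lam / lam = a at *
    field_simp
  obtain ⟨E, hEne, hE1, hnet⟩ := exists_net n hn (δ := t0 / 4) (by positivity)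
  have hcard : 0 < (E.card : ℝ) := by exact_mod_cast hEne.card_pos
  obtain ⟨θ, hθ, hWH⟩ := weak_harnack n (Lam / lam) hL (1 / (E.card : ℝ)) (by positivity)
    (t0 / 2 / 2) (by positivity)
  obtain ⟨K, hK⟩ := exists_nat_gt ((E.card : ℝ) / (θ / 2))
  rw [div_lt_iff₀ (by positivity)] at hK
  have hK0 : K ≠ 0 := by
    rintro rfl
    simp at hK
    linarith
  refine ⟨(1 / 20 : ℝ) ^ K, ⟨by positivity, pow_lt_one₀ (by norm_num) (by norm_num) hK0⟩, ?_⟩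
  intro F hconc _ hF u hu0 hFu hdiam
  have hu : ∀ x ∈ ball (0 : En n) 1, ContDiffAt ℝ 2 u x := fun x hx =>
    hu0.contDiffAt (isOpen_ball.mem_nhds hx)
  have hbdd : BddAbove {d : ℝ | ∃ x ∈ ball (0 : En n) 1, ∃ y ∈ ball (0 : En n) 1,
      d = opNorm (hessian u x - hessian u y)} := by
    by_contra hc
    rw [hessDiam, Real.sSup_of_not_bddAbove hc] at hdiam
    norm_num at hdiam
  have hd : ∀ x ∈ ball (0 : En n) 1, ∀ y ∈ ball (0 : En n) 1,
      opNorm (hessian u x - hessian u y) ≤ 1 := by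
    intro x hx y hy
    rw [← hdiam]
    exact le_csSup hbdd ⟨x, hx, y, hy, rfl⟩
  have hosc : ∀ e ∈ E, ∀ x ∈ ball (0 : En n) 1, ∀ y ∈ ball (0 : En n) 1,
      H2 u x e ≤ H2 u y e + 1 := by
    intro e he x hx y hy
    have h1 := (le_abs_self _).trans (abs_qf_le (hessian u x - hessian u y) e)
    rw [qf_sub, hess_qf (hu x hx), hess_qf (hu y hy), hE1 e he] at h1
    linarith [hd x hx y hy]
  have h00 : ∀ r : ℝ, 0 < r → (0 : En n) ∈ ball (0 : En n) r := fun r hr => mem_ball_self hr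
  -- all pairs are close in the small ball
  have hmain : ∀ x ∈ ball (0 : En n) ((1 / 20 : ℝ) ^ K), ∀ y ∈ ball (0 : En n) ((1 / 20 : ℝ) ^ K),
      opNorm (hessian u x - hessian u y) ≤ 1 / 4 := by
    by_contra! hc
    obtain ⟨x1, hx1, x2, hx2, hbig⟩ := hc
    have hit : ∀ k : ℕ, k ≤ K → ∃ S : En n → ℝ,
        (∀ e ∈ E, ∀ x ∈ ball (0 : En n) ((1 / 20 : ℝ) ^ k), H2 u x e ≤ S e) ∧
        ∑ e ∈ E, S e ≤ ∑ e ∈ E, (H2 u 0 e + 1) - k * (θ / 2) := by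
      intro k
      induction k with
      | zero =>
        intro _
        refine ⟨fun e => H2 u 0 e + 1, fun e he x hx => ?_, by simp⟩
        rw [pow_zero] at hx
        exact hosc e he x hx 0 (h00 1 one_pos)
      | succ k ih =>
        intro hk
        obtain ⟨S, hS, hsum⟩ := ih (by omega)
        have hr : (0 : ℝ) < (1 / 20 : ℝ) ^ k := by positivity
        have hr1 : (1 / 20 : ℝ) ^ k ≤ 1 := pow_le_one₀ (by norm_num) (by norm_num)
        have hrK : (1 / 20 : ℝ) ^ K ≤ (1 / 20 : ℝ) ^ k :=
          pow_le_pow_of_le_one (by norm_num) (by norm_num) (by omega)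
        have hsub := ball_subset_ball (x := (0 : En n)) hr1
        have hsub2 := ball_subset_ball (x := (0 : En n)) hrK
        obtain ⟨e0, he0, hstep⟩ := step_lemma hlam hLam hconc hF hr (fun x hx => hu x (hsub hx))
          (fun x hx => hFu x (hsub hx)) (fun x hx y hy => hd x (hsub hx) y (hsub hy)) ht0p ht1 E
          hEne hE1 hnet hθ hWH S hS (hsub2 hx1) (hsub2 hx2) hbig
        have hpow : (1 / 20 : ℝ) ^ (k + 1) = (1 / 20 : ℝ) ^ k / 20 := by rw [pow_succ]; ring
        classical
        refine ⟨fun e => S e - (if e = e0 then θ / 2 else 0), fun e he x hx => ?_, ?_⟩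
        · rw [hpow] at hx
          by_cases hee : e = e0
          · simp only [hee, if_true]
            exact hstep x hx
          · simp only [hee, if_false, sub_zero]
            exact hS e he x (ball_subset_ball (by linarith) hx)
        · rw [Finset.sum_sub_distrib, Finset.sum_ite_eq' E e0, if_pos he0]
          push_cast
          linarith
    obtain ⟨S, hS, hsum⟩ := hit K le_rfl
    have hlow : ∑ e ∈ E, H2 u 0 e ≤ ∑ e ∈ E, S e :=
      Finset.sum_le_sum fun e he => hS e he 0 (h00 _ (by positivity))
    rw [Finset.sum_add_distrib, Finset.sum_const, nsmul_eq_mul, mul_one] at hsum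
    linarith
  refine lt_of_le_of_lt (b := (1 / 4 : ℝ)) (csSup_le ?_ ?_) (by norm_num)
  · exact ⟨_, 0, h00 _ (by positivity), 0, h00 _ (by positivity), rfl⟩
  · rintro d ⟨x, hx, y, hy, rfl⟩
    exact hmain x hx y hy
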